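/- There exists an absolute constant C > 0 with the following property. In the setting of 1-bit matrix completion under Condition U (F : ℝ → (0,1) differentiable with F, F' nonzero on [−α, α] and L_α, β_α, U_α finite; M* ∈ K_max(α, R); S = ((i₁,j₁), …, (iₙ,jₙ)) i.i.d. from Π with 2 < n ≤ d1 d2; given S, Y_{i_t,j_t} independent ±1 with P(Y_{i_t,j_t}=1) = F(M*_{i_t,j_t}); M̂_max a minimizer of the negative log-likelihood ℓ_S(M; Y) over K_max(α, R)), suppose in addition there is μ ≥ 1 with π_{kl} ≥ 1/(μ d1 d2) for all (k,l) ∈ [d1]×[d2]. Then with probability at least 1 − 4/d, (1/(d1 d2)) ‖M̂_max − M*‖_F² ≤ C μ β_α { L_α R √(d/n) + U_α √( log(d)/n ) }, where d = d1 + d2. -/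

import Mathlib

open scoped BigOperators
open Matrix

/-- The elementwise `ℓ∞`-norm of a matrix: `max_{k,l} |M_{k,l}|`. -/
noncomputable def linfNorm {d1 d2 : ℕ} (M : Matrix (Fin d1) (Fin d2) ℝ) : ℝ :=
  ⨆ k, ⨆ l, |M k l|

/-- The Frobenius norm of a real matrix. -/
noncomputable def frobeniusNorm {d1 d2 : ℕ} (M : Matrix (Fin d1) (Fin d2) ℝ) : ℝ :=
  Real.sqrt (∑ k, ∑ l, (M k l) ^ 2)

/-- The largest `ℓ₂`-norm of a row of a matrix (the `(2,∞)` operator norm). -/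
noncomputable def rowMaxNorm {n k : ℕ} (U : Matrix (Fin n) (Fin k) ℝ) : ℝ :=
  ⨆ i, Real.sqrt (∑ j, (U i j) ^ 2)

/-- The max-norm of a real matrix: the infimum of `‖U‖_{2,∞} ‖V‖_{2,∞}` over all
factorizations `M = U * Vᵀ`. -/
noncomputable def maxNorm {d1 d2 : ℕ} (M : Matrix (Fin d1) (Fin d2) ℝ) : ℝ :=
  sInf { c : ℝ | ∃ (k : ℕ) (U : Matrix (Fin d1) (Fin k) ℝ) (V : Matrix (Fin d2) (Fin k) ℝ),
    0 < k ∧ M = U * Vᵀ ∧ c = rowMaxNorm U * rowMaxNorm V }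

/-- The negative log-likelihood `ℓ_S(M; Y)` of the matrix `M` for observed signs
`y : Fin n → Bool` (`y t = true` encodes `Y_{i_t,j_t} = +1`) at sampled index pairs `S`. -/
noncomputable def negLogLik {d1 d2 n : ℕ} (F : ℝ → ℝ)
    (S : Fin n → Fin d1 × Fin d2) (y : Fin n → Bool)
    (M : Matrix (Fin d1) (Fin d2) ℝ) : ℝ :=
  ∑ t, if y t then Real.log (1 / F (M (S t).1 (S t).2))
    else Real.log (1 / (1 - F (M (S t).1 (S t).2)))

/-- The probability weight of the outcome `(S, y)` under i.i.d. sampling of the index pairs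
from `Π` and, given `S`, independent signs with `P(Y_{i_t,j_t} = 1) = F(M*_{i_t,j_t})`. -/
noncomputable def sampleWeight {d1 d2 n : ℕ} (F : ℝ → ℝ) (π : Fin d1 → Fin d2 → ℝ)
    (Mstar : Matrix (Fin d1) (Fin d2) ℝ)
    (S : Fin n → Fin d1 × Fin d2) (y : Fin n → Bool) : ℝ :=
  ∏ t, π (S t).1 (S t).2 *
    (if y t then F (Mstar (S t).1 (S t).2) else 1 - F (Mstar (S t).1 (S t).2))

/-!
Put `d = d₁ + d₂`. Through the variance-stabilizing transform `arcsin √p`, the Kullback–Leibler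
divergence of two Bernoulli laws dominates a multiple of the squared distance of their parameters
on the scale of the link function, so that `‖M̂ - M*‖_F² / (d₁ d₂)` is at most `π² μ β_α` times the
expected excess of the logarithmic loss at `M̂`. Since `M̂` minimizes the empirical loss, this
expectation is at most the uniform deviation of the empirical excess loss from its mean over the
values of `M̂`. Symmetrization and Ledoux–Talagrand contraction, applied under an exponential,
reduce the deviation to `L_α` times a Rademacher sum that is linear in the matrix, and duality
together with Grothendieck's inequality bounds that sum by a multiple of `R` times the `ℓ∞ → ℓ₁`
norm of the random signed sample matrix. The latter is a maximum of `2 ^ d` sums of `n` independent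
signs, so the deviation is of order `L_α R √(d n)` outside an event of probability `exp (-d)`.
-/

open scoped InnerProductSpace

/-! ### Rademacher sums -/

/-- The sign encoded by a Boolean: `true` is `1` and `false` is `-1`. -/
def boolSign (b : Bool) : ℝ := if b then 1 else -1

@[simp] lemma boolSign_true : boolSign true = 1 := rfl

@[simp] lemma boolSign_false : boolSign false = -1 := rfl

lemma abs_boolSign (b : Bool) : |boolSign b| = 1 := by cases b <;> simp

/-- The Rademacher sum `∑ⱼ εⱼ uⱼ` with coefficients `u`, as a function of the signs. -/
def rademacherSum {κ : Type*} [Fintype κ] (u : κ → ℝ) (ε : κ → Bool) : ℝ :=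
  ∑ j, boolSign (ε j) * u j

lemma rademacherSum_cons {k : ℕ} (u : Fin (k + 1) → ℝ) (b : Bool) (ε : Fin k → Bool) :
    rademacherSum u (Fin.cons b ε) = boolSign b * u 0 + rademacherSum (Fin.tail u) ε := by
  simp [rademacherSum, Fin.sum_univ_succ, Fin.tail]

lemma sum_fin_succ_pi {Ω M : Type*} [Fintype Ω] [AddCommMonoid M] {n : ℕ}
    (f : (Fin (n + 1) → Ω) → M) :
    ∑ w, f w = ∑ ω, ∑ w : Fin n → Ω, f (Fin.cons ω w) := by
  rw [← (Fin.consEquiv fun _ ↦ Ω).sum_comp, Fintype.sum_prod_type]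
  rfl

lemma expect_fin_succ_bool {k : ℕ} (f : (Fin (k + 1) → Bool) → ℝ) :
    𝔼 ε, f ε = 𝔼 ε : Fin k → Bool, (f (Fin.cons true ε) + f (Fin.cons false ε)) / 2 := by
  simp only [Fintype.expect_eq_sum_div_card, sum_fin_succ_pi, Fintype.sum_bool,
    ← Finset.sum_add_distrib, ← Finset.sum_div, Fintype.card_pi, Fintype.card_bool,
    Finset.prod_const, Finset.card_univ, Fintype.card_fin, pow_succ, Nat.cast_mul]
  rw [div_div, mul_comm]
  norm_num

lemma expect_rademacherSum_mul {k : ℕ} (u v : Fin k → ℝ) :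
    𝔼 ε, rademacherSum u ε * rademacherSum v ε = ∑ j, u j * v j := by
  induction k with
  | zero => simp [rademacherSum]
  | succ k ih =>
    have average (ε : Fin k → Bool) :
        (rademacherSum u (Fin.cons true ε) * rademacherSum v (Fin.cons true ε)
          + rademacherSum u (Fin.cons false ε) * rademacherSum v (Fin.cons false ε)) / 2
        = u 0 * v 0 + rademacherSum (Fin.tail u) ε * rademacherSum (Fin.tail v) ε := by
      simp only [rademacherSum_cons, boolSign_true, boolSign_false]
      ring
    simp only [expect_fin_succ_bool, average, Finset.expect_add_distrib, Fintype.expect_const, ih,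
      Fin.sum_univ_succ, Fin.tail]

lemma expect_rademacherSum_sq {k : ℕ} (u : Fin k → ℝ) :
    𝔼 ε, rademacherSum u ε ^ 2 = ∑ j, u j ^ 2 := by
  simpa only [pow_two] using expect_rademacherSum_mul u u

lemma expect_rademacherSum_pow_four_le {k : ℕ} (u : Fin k → ℝ) :
    𝔼 ε, rademacherSum u ε ^ 4 ≤ 3 * (∑ j, u j ^ 2) ^ 2 := by
  induction k with
  | zero => simp [rademacherSum]
  | succ k ih =>
    have average (ε : Fin k → Bool) :
        (rademacherSum u (Fin.cons true ε) ^ 4 + rademacherSum u (Fin.cons false ε) ^ 4) / 2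
        = u 0 ^ 4 + 6 * u 0 ^ 2 * rademacherSum (Fin.tail u) ε ^ 2
          + rademacherSum (Fin.tail u) ε ^ 4 := by
      simp only [rademacherSum_cons, boolSign_true, boolSign_false]
      ring
    simp only [expect_fin_succ_bool, average, Finset.expect_add_distrib, Fintype.expect_const,
      ← Finset.mul_expect, expect_rademacherSum_sq, Fin.sum_univ_succ]
    have tail_bound := ih (Fin.tail u)
    simp only [Fin.tail] at tail_bound ⊢
    nlinarith [sq_nonneg (u 0 ^ 2)]

/-! ### Grothendieck's inequality -/

section Grothendieck

variable {ι κ : Type*} [Fintype ι] [Fintype κ]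

/-- The `ℓ∞ → ℓ₁` norm of a matrix, as the maximum of `sᵀ A t` over sign vectors `s`, `t`. -/
noncomputable def inftyOneNorm (A : Matrix ι κ ℝ) : ℝ :=
  ⨆ st : (ι → Bool) × (κ → Bool), (boolSign ∘ st.1) ⬝ᵥ A *ᵥ (boolSign ∘ st.2)

lemma exists_boolSign_dotProduct_ge {T : ℝ} {x : ι → ℝ} (hx : ∀ i, |x i| ≤ T) (c : ι → ℝ) :
    ∃ s : ι → Bool, x ⬝ᵥ c ≤ T * ((boolSign ∘ s) ⬝ᵥ c) := by
  refine ⟨fun i ↦ decide (0 ≤ c i), ?_⟩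
  rw [dotProduct, dotProduct, Finset.mul_sum]
  refine Finset.sum_le_sum fun i _ ↦ ?_
  have sign_mul : boolSign (decide (0 ≤ c i)) * c i = |c i| := by
    rcases le_or_gt 0 (c i) with h | h
    · simp [h, abs_of_nonneg]
    · simp [h, not_le.mpr h, abs_of_neg]
  calc x i * c i ≤ |x i * c i| := le_abs_self _
    _ = |x i| * |c i| := abs_mul _ _
    _ ≤ T * |c i| := by gcongr; exact hx i
    _ = T * ((boolSign ∘ fun i ↦ decide (0 ≤ c i)) i * c i) := by
      rw [Function.comp_apply, sign_mul]

lemma dotProduct_mulVec_le_inftyOneNorm {T : ℝ} (hT : 0 ≤ T) (A : Matrix ι κ ℝ)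
    {x : ι → ℝ} {y : κ → ℝ} (hx : ∀ i, |x i| ≤ T) (hy : ∀ j, |y j| ≤ T) :
    x ⬝ᵥ A *ᵥ y ≤ T ^ 2 * inftyOneNorm A := by
  obtain ⟨s, hs⟩ := exists_boolSign_dotProduct_ge hx (A *ᵥ y)
  obtain ⟨t, ht⟩ := exists_boolSign_dotProduct_ge hy ((boolSign ∘ s) ᵥ* A)
  calc x ⬝ᵥ A *ᵥ y ≤ T * ((boolSign ∘ s) ⬝ᵥ A *ᵥ y) := hs
    _ = T * (y ⬝ᵥ (boolSign ∘ s) ᵥ* A) := by rw [dotProduct_mulVec, dotProduct_comm]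
    _ ≤ T * (T * ((boolSign ∘ t) ⬝ᵥ (boolSign ∘ s) ᵥ* A)) := by gcongr
    _ = T ^ 2 * ((boolSign ∘ s) ⬝ᵥ A *ᵥ (boolSign ∘ t)) := by
      rw [dotProduct_comm, ← dotProduct_mulVec]; ring
    _ ≤ T ^ 2 * inftyOneNorm A := by
      gcongr
      exact le_ciSup (f := fun st : (ι → Bool) × (κ → Bool) ↦
        (boolSign ∘ st.1) ⬝ᵥ A *ᵥ (boolSign ∘ st.2)) (Set.finite_range _).bddAbove (s, t)

section GramPairing

variable {E : Type*} [NormedAddCommGroup E] [InnerProductSpace ℝ E]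

/-- The pairing `∑ᵢⱼ Aᵢⱼ ⟪uᵢ, vⱼ⟫` of a matrix with the mutual Gram matrix of two families. -/
def gramPairing (A : Matrix ι κ ℝ) (u : ι → E) (v : κ → E) : ℝ :=
  ∑ i, ∑ j, A i j * ⟪u i, v j⟫_ℝ

lemma gramPairing_add_left (A : Matrix ι κ ℝ) (u u' : ι → E) (v : κ → E) :
    gramPairing A (u + u') v = gramPairing A u v + gramPairing A u' v := by
  simp only [gramPairing, Pi.add_apply, inner_add_left, mul_add, Finset.sum_add_distrib]

lemma gramPairing_add_right (A : Matrix ι κ ℝ) (u : ι → E) (v v' : κ → E) :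
    gramPairing A u (v + v') = gramPairing A u v + gramPairing A u v' := by
  simp only [gramPairing, Pi.add_apply, inner_add_right, mul_add, Finset.sum_add_distrib]

lemma gramPairing_smul_smul (A : Matrix ι κ ℝ) (a b : ℝ) (u : ι → E) (v : κ → E) :
    gramPairing A (a • u) (b • v) = a * b * gramPairing A u v := by
  simp only [gramPairing, Pi.smul_apply, real_inner_smul_left, real_inner_smul_right,
    Finset.mul_sum]
  exact Finset.sum_congr rfl fun i _ ↦ Finset.sum_congr rfl fun j _ ↦ by ring

lemma gramPairing_le_sum_abs (A : Matrix ι κ ℝ) {u : ι → E} {v : κ → E} (hu : ∀ i, ‖u i‖ ≤ 1)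
    (hv : ∀ j, ‖v j‖ ≤ 1) : gramPairing A u v ≤ ∑ i, ∑ j, |A i j| := by
  refine Finset.sum_le_sum fun i _ ↦ Finset.sum_le_sum fun j _ ↦ ?_
  have inner_le_one : |⟪u i, v j⟫_ℝ| ≤ 1 :=
    (abs_real_inner_le_norm _ _).trans (mul_le_one₀ (hu i) (norm_nonneg _) (hv j))
  calc A i j * ⟪u i, v j⟫_ℝ ≤ |A i j| * |⟪u i, v j⟫_ℝ| := abs_mul (A i j) _ ▸ le_abs_self _
    _ ≤ |A i j| := mul_le_of_le_one_right (abs_nonneg _) inner_le_one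

end GramPairing

/-- The values `∑ᵢⱼ Aᵢⱼ ⟪uᵢ, vⱼ⟫` for vectors in the unit balls of the spaces `ℝᵏ`. -/
def gramPairingValues (A : Matrix ι κ ℝ) : Set ℝ :=
  {c | ∃ (k : ℕ) (u : ι → EuclideanSpace ℝ (Fin k)) (v : κ → EuclideanSpace ℝ (Fin k)),
    (∀ i, ‖u i‖ ≤ 1) ∧ (∀ j, ‖v j‖ ≤ 1) ∧ gramPairing A u v = c}

/-- The Grothendieck norm of a matrix, which is the dual norm of the max-norm. -/
noncomputable def grothendieckNorm (A : Matrix ι κ ℝ) : ℝ := sSup (gramPairingValues A)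

lemma zero_mem_gramPairingValues (A : Matrix ι κ ℝ) : 0 ∈ gramPairingValues A :=
  ⟨0, 0, 0, by simp, by simp, by simp [gramPairing]⟩

lemma bddAbove_gramPairingValues (A : Matrix ι κ ℝ) : BddAbove (gramPairingValues A) := by
  refine ⟨∑ i, ∑ j, |A i j|, ?_⟩
  rintro _ ⟨k, u, v, hu, hv, rfl⟩
  exact gramPairing_le_sum_abs A hu hv

lemma grothendieckNorm_nonneg (A : Matrix ι κ ℝ) : 0 ≤ grothendieckNorm A :=
  le_csSup (bddAbove_gramPairingValues A) (zero_mem_gramPairingValues A)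

lemma smul_inv_smul_of_norm_le {E : Type*} [NormedAddCommGroup E] [NormedSpace ℝ E]
    {a : ℝ} {x : E} (hx : ‖x‖ ≤ a) : a • a⁻¹ • x = x := by
  rcases eq_or_ne a 0 with rfl | ha
  · simp [norm_le_zero_iff.mp hx]
  · exact smul_inv_smul₀ ha x

lemma norm_inv_smul_le_one {E : Type*} [NormedAddCommGroup E] [NormedSpace ℝ E]
    {a : ℝ} {x : E} (hx : ‖x‖ ≤ a) : ‖a⁻¹ • x‖ ≤ 1 := by
  have ha : 0 ≤ a := (norm_nonneg x).trans hx
  rw [norm_smul, norm_inv, Real.norm_of_nonneg ha]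
  exact inv_mul_le_one_of_le₀ hx ha

section FiniteDimensional

variable {E : Type*} [NormedAddCommGroup E] [InnerProductSpace ℝ E] [FiniteDimensional ℝ E]

lemma gramPairing_le_grothendieckNorm (A : Matrix ι κ ℝ) {u : ι → E} {v : κ → E}
    (hu : ∀ i, ‖u i‖ ≤ 1) (hv : ∀ j, ‖v j‖ ≤ 1) : gramPairing A u v ≤ grothendieckNorm A := by
  let coords := (stdOrthonormalBasis ℝ E).repr
  refine le_csSup (bddAbove_gramPairingValues A)
    ⟨_, fun i ↦ coords (u i), fun j ↦ coords (v j), fun i ↦ ?_, fun j ↦ ?_, ?_⟩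
  · rw [coords.norm_map]; exact hu i
  · rw [coords.norm_map]; exact hv j
  · simp only [gramPairing, coords.inner_map_map]

lemma gramPairing_le_mul_grothendieckNorm (A : Matrix ι κ ℝ) {u : ι → E} {v : κ → E} {a b : ℝ}
    (ha : 0 ≤ a) (hb : 0 ≤ b) (hu : ∀ i, ‖u i‖ ≤ a) (hv : ∀ j, ‖v j‖ ≤ b) :
    gramPairing A u v ≤ a * b * grothendieckNorm A := by
  have rescale_u : u = a • a⁻¹ • u := funext fun i ↦ (smul_inv_smul_of_norm_le (hu i)).symm
  have rescale_v : v = b • b⁻¹ • v := funext fun j ↦ (smul_inv_smul_of_norm_le (hv j)).symm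
  rw [rescale_u, rescale_v, gramPairing_smul_smul]
  gcongr
  exact gramPairing_le_grothendieckNorm A (fun i ↦ norm_inv_smul_le_one (hu i))
    fun j ↦ norm_inv_smul_le_one (hv j)

lemma abs_gramPairing_le (A : Matrix ι κ ℝ) {u : ι → E} {v : κ → E} {a b : ℝ}
    (ha : 0 ≤ a) (hb : 0 ≤ b) (hu : ∀ i, ‖u i‖ ≤ a) (hv : ∀ j, ‖v j‖ ≤ b) :
    |gramPairing A u v| ≤ a * b * grothendieckNorm A := by
  refine abs_le'.mpr ⟨gramPairing_le_mul_grothendieckNorm A ha hb hu hv, ?_⟩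
  have neg_pairing : -gramPairing A u v = gramPairing A (-u) v := by simp [gramPairing]
  rw [neg_pairing]
  exact gramPairing_le_mul_grothendieckNorm A ha hb (by simpa using hu) hv

end FiniteDimensional

/-- A random variable on the uniform finite space `Ω` as a vector of `L²(Ω)`, the latter being
encoded as a Euclidean space by rescaling. -/
noncomputable def uniformL2 {Ω : Type*} [Fintype Ω] :
    (Ω → ℝ) →ₗ[ℝ] EuclideanSpace ℝ Ω :=
  (√(Fintype.card Ω))⁻¹ • (WithLp.linearEquiv 2 ℝ (Ω → ℝ)).symm.toLinearMap

lemma inner_uniformL2 {Ω : Type*} [Fintype Ω] (f g : Ω → ℝ) :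
    ⟪uniformL2 f, uniformL2 g⟫_ℝ = 𝔼 ω, f ω * g ω := by
  simp only [uniformL2, LinearMap.smul_apply, real_inner_smul_left, real_inner_smul_right,
    ← mul_assoc, ← mul_inv, Real.mul_self_sqrt (Nat.cast_nonneg _),
    Fintype.expect_eq_sum_div_card, div_eq_inv_mul]
  simp [PiLp.inner_apply, mul_comm]

lemma norm_uniformL2_le {Ω : Type*} [Fintype Ω] {f : Ω → ℝ} {a : ℝ} (ha : 0 ≤ a)
    (hf : 𝔼 ω, f ω ^ 2 ≤ a ^ 2) : ‖uniformL2 f‖ ≤ a := by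
  refine (sq_le_sq₀ (norm_nonneg _) ha).mp ?_
  rw [← real_inner_self_eq_norm_sq, inner_uniformL2]
  simpa only [pow_two] using hf

lemma gramPairing_uniformL2 {Ω : Type*} [Fintype Ω] (A : Matrix ι κ ℝ)
    (f : ι → Ω → ℝ) (g : κ → Ω → ℝ) :
    gramPairing A (fun i ↦ uniformL2 (f i)) (fun j ↦ uniformL2 (g j))
      = 𝔼 ω, (fun i ↦ f i ω) ⬝ᵥ A *ᵥ (fun j ↦ g j ω) := by
  simp only [gramPairing, inner_uniformL2, dotProduct, mulVec, Finset.mul_sum, Finset.mul_expect,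
    Finset.expect_sum_comm]
  refine Finset.sum_congr rfl fun i _ ↦ Finset.sum_congr rfl fun j _ ↦
    Finset.expect_congr rfl fun ω _ ↦ by ring

/-- Truncation to zero outside the interval `[-T, T]`. -/
noncomputable def truncate (T x : ℝ) : ℝ := if |x| ≤ T then x else 0

lemma abs_truncate_le {T : ℝ} (hT : 0 ≤ T) (x : ℝ) : |truncate T x| ≤ T := by
  unfold truncate
  split_ifs with h
  · exact h
  · simpa using hT

lemma truncate_sq_le (T x : ℝ) : truncate T x ^ 2 ≤ x ^ 2 := by
  unfold truncate
  split_ifs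
  · exact le_rfl
  · simpa using sq_nonneg x

lemma sub_truncate_sq_le {T : ℝ} (hT : 0 < T) (x : ℝ) :
    (x - truncate T x) ^ 2 ≤ x ^ 4 / T ^ 2 := by
  unfold truncate
  split_ifs with h
  · simp only [sub_self, ne_eq, OfNat.ofNat_ne_zero, not_false_eq_true, zero_pow]
    positivity
  · have T_sq_le : T ^ 2 ≤ x ^ 2 := by
      rw [← sq_abs x]
      exact pow_le_pow_left₀ hT.le (not_le.mp h).le 2
    rw [sub_zero, le_div_iff₀ (by positivity)]
    nlinarith [sq_nonneg x]

section RademacherVectors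

variable {k : ℕ}

/-- The truncated Rademacher sum with coefficients `u`, as a vector of `L²`. -/
noncomputable def truncatedPart (T : ℝ) (u : EuclideanSpace ℝ (Fin k)) :
    EuclideanSpace ℝ (Fin k → Bool) :=
  uniformL2 fun ε ↦ truncate T (rademacherSum u ε)

/-- What truncation removes from the Rademacher sum with coefficients `u`, as a vector of `L²`. -/
noncomputable def tailPart (T : ℝ) (u : EuclideanSpace ℝ (Fin k)) :
    EuclideanSpace ℝ (Fin k → Bool) :=
  uniformL2 fun ε ↦ rademacherSum u ε - truncate T (rademacherSum u ε)

lemma inner_truncatedPart_add_tailPart (T : ℝ) (u v : EuclideanSpace ℝ (Fin k)) :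
    ⟪truncatedPart T u + tailPart T u, truncatedPart T v + tailPart T v⟫_ℝ = ⟪u, v⟫_ℝ := by
  have sum_eq (w : EuclideanSpace ℝ (Fin k)) :
      truncatedPart T w + tailPart T w = uniformL2 (rademacherSum w) := by
    rw [truncatedPart, tailPart, ← map_add]
    congr 1
    ext ε
    simp
  rw [sum_eq, sum_eq, inner_uniformL2, expect_rademacherSum_mul]
  simp [PiLp.inner_apply, mul_comm]

lemma norm_truncatedPart_add_tailPart (T : ℝ) (u : EuclideanSpace ℝ (Fin k)) :
    ‖truncatedPart T u + tailPart T u‖ = ‖u‖ := by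
  simp only [norm_eq_sqrt_real_inner, inner_truncatedPart_add_tailPart]

variable {u : EuclideanSpace ℝ (Fin k)}

lemma norm_truncatedPart_le (hu : ‖u‖ ≤ 1) (T : ℝ) : ‖truncatedPart T u‖ ≤ 1 := by
  refine norm_uniformL2_le one_pos.le ?_
  calc 𝔼 ε, truncate T (rademacherSum u ε) ^ 2 ≤ 𝔼 ε, rademacherSum u ε ^ 2 :=
        Finset.expect_le_expect fun ε _ ↦ truncate_sq_le _ _
    _ = ‖u‖ ^ 2 := by rw [expect_rademacherSum_sq, EuclideanSpace.real_norm_sq_eq]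
    _ ≤ 1 ^ 2 := pow_le_pow_left₀ (norm_nonneg u) hu 2

lemma norm_tailPart_le (hu : ‖u‖ ≤ 1) {T : ℝ} (hT : 0 < T) : ‖tailPart T u‖ ≤ √3 / T := by
  refine norm_uniformL2_le (by positivity) ?_
  calc 𝔼 ε, (rademacherSum u ε - truncate T (rademacherSum u ε)) ^ 2
      ≤ 𝔼 ε, rademacherSum u ε ^ 4 / T ^ 2 :=
        Finset.expect_le_expect fun ε _ ↦ sub_truncate_sq_le hT _
    _ = (𝔼 ε, rademacherSum u ε ^ 4) / T ^ 2 := by rw [Finset.expect_div]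
    _ ≤ 3 * (‖u‖ ^ 2) ^ 2 / T ^ 2 := by
      gcongr
      rw [EuclideanSpace.real_norm_sq_eq]
      exact expect_rademacherSum_pow_four_le u
    _ ≤ 3 / T ^ 2 := by
      gcongr
      rw [← pow_mul]
      exact mul_le_of_le_one_right (by norm_num) (pow_le_one₀ (norm_nonneg u) hu)
    _ = (√3 / T) ^ 2 := by rw [div_pow, Real.sq_sqrt (by norm_num)]

lemma gramPairing_truncatedPart_le {T : ℝ} (hT : 0 ≤ T) (A : Matrix ι κ ℝ)
    (u : ι → EuclideanSpace ℝ (Fin k)) (v : κ → EuclideanSpace ℝ (Fin k)) :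
    gramPairing A (truncatedPart T ∘ u) (truncatedPart T ∘ v) ≤ T ^ 2 * inftyOneNorm A := by
  refine (gramPairing_uniformL2 A _ _).trans_le (Finset.expect_le Finset.univ_nonempty ?_)
  exact fun ε _ ↦ dotProduct_mulVec_le_inftyOneNorm hT A (fun i ↦ abs_truncate_le hT _)
    fun j ↦ abs_truncate_le hT _

end RademacherVectors

/-- The truncated Rademacher sums are controlled by the sign vectors; the removed tails have
`L²`-norm at most `1 / 4`, so that their contribution is absorbed by homogeneity. -/
lemma gramPairing_le_inftyOneNorm_add_half (A : Matrix ι κ ℝ) {k : ℕ}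
    {u : ι → EuclideanSpace ℝ (Fin k)} {v : κ → EuclideanSpace ℝ (Fin k)}
    (hu : ∀ i, ‖u i‖ ≤ 1) (hv : ∀ j, ‖v j‖ ≤ 1) :
    gramPairing A u v ≤ 48 * inftyOneNorm A + grothendieckNorm A / 2 := by
  let main (w : EuclideanSpace ℝ (Fin k)) := truncatedPart √48 w
  let tail (w : EuclideanSpace ℝ (Fin k)) := tailPart √48 w
  have norm_tail_le {w : EuclideanSpace ℝ (Fin k)} (hw : ‖w‖ ≤ 1) : ‖tail w‖ ≤ 1 / 4 := by
    refine (norm_tailPart_le hw (by positivity)).trans_eq ?_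
    rw [← Real.sqrt_div (by norm_num), show (3 / 48 : ℝ) = (1 / 4) ^ 2 by norm_num,
      Real.sqrt_sq (by norm_num)]
  have isometric : gramPairing A u v
      = gramPairing A (main ∘ u + tail ∘ u) (main ∘ v + tail ∘ v) := by
    simp only [gramPairing, Pi.add_apply, Function.comp_apply, main, tail,
      inner_truncatedPart_add_tailPart]
  have main_main : gramPairing A (main ∘ u) (main ∘ v) ≤ 48 * inftyOneNorm A := by
    simpa using gramPairing_truncatedPart_le (Real.sqrt_nonneg 48) A u v
  have main_tail : gramPairing A (main ∘ u) (tail ∘ v) ≤ 1 * (1 / 4) * grothendieckNorm A :=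
    gramPairing_le_mul_grothendieckNorm A one_pos.le (by norm_num)
      (fun i ↦ norm_truncatedPart_le (hu i) _) fun j ↦ norm_tail_le (hv j)
  have tail_all : gramPairing A (tail ∘ u) (main ∘ v + tail ∘ v)
      ≤ 1 / 4 * 1 * grothendieckNorm A :=
    gramPairing_le_mul_grothendieckNorm A (by norm_num) one_pos.le
      (fun i ↦ norm_tail_le (hu i))
      fun j ↦ (norm_truncatedPart_add_tailPart _ (v j)).trans_le (hv j)
  rw [isometric, gramPairing_add_left, gramPairing_add_right]
  linarith

lemma grothendieckNorm_le_inftyOneNorm (A : Matrix ι κ ℝ) :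
    grothendieckNorm A ≤ 96 * inftyOneNorm A := by
  have le_add_half : grothendieckNorm A ≤ 48 * inftyOneNorm A + grothendieckNorm A / 2 := by
    refine csSup_le ⟨0, zero_mem_gramPairingValues A⟩ ?_
    rintro _ ⟨k, u, v, hu, hv, rfl⟩
    exact gramPairing_le_inftyOneNorm_add_half A hu hv
  linarith

end Grothendieck

/-! ### The max-norm -/

section MaxNorm

variable {d1 d2 : ℕ}

/-- The set `K_max(α, R)` of matrices with entries bounded by `α` and max-norm at most `R`. -/
def maxNormBall (α R : ℝ) : Set (Matrix (Fin d1) (Fin d2) ℝ) :=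
  {M | linfNorm M ≤ α ∧ maxNorm M ≤ R}

lemma abs_apply_le_linfNorm (M : Matrix (Fin d1) (Fin d2) ℝ) (k : Fin d1) (l : Fin d2) :
    |M k l| ≤ linfNorm M :=
  (le_ciSup (Set.finite_range fun l ↦ |M k l|).bddAbove l).trans
    (le_ciSup (Set.finite_range fun k ↦ ⨆ l, |M k l|).bddAbove k)

lemma apply_mem_Icc_of_linfNorm_le {M : Matrix (Fin d1) (Fin d2) ℝ} {α : ℝ}
    (hM : linfNorm M ≤ α) (k : Fin d1) (l : Fin d2) : M k l ∈ Set.Icc (-α) α :=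
  abs_le.mp ((abs_apply_le_linfNorm M k l).trans hM)

lemma norm_row_le_rowMaxNorm {k : ℕ} (U : Matrix (Fin d1) (Fin k) ℝ) (i : Fin d1) :
    ‖WithLp.toLp 2 (U i)‖ ≤ rowMaxNorm U := by
  rw [EuclideanSpace.norm_eq]
  simpa only [Real.norm_eq_abs, sq_abs, rowMaxNorm] using
    le_ciSup (f := fun i ↦ √(∑ j, U i j ^ 2)) (Set.finite_range _).bddAbove i

lemma rowMaxNorm_nonneg {k : ℕ} (U : Matrix (Fin d1) (Fin k) ℝ) : 0 ≤ rowMaxNorm U :=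
  Real.iSup_nonneg fun _ ↦ Real.sqrt_nonneg _

lemma maxNorm_nonneg (M : Matrix (Fin d1) (Fin d2) ℝ) : 0 ≤ maxNorm M := by
  refine Real.sInf_nonneg ?_
  rintro _ ⟨k, U, V, -, -, rfl⟩
  exact mul_nonneg (rowMaxNorm_nonneg U) (rowMaxNorm_nonneg V)

lemma abs_sum_mul_le_of_factorization (A : Matrix (Fin d1) (Fin d2) ℝ) {k : ℕ}
    (U : Matrix (Fin d1) (Fin k) ℝ) (V : Matrix (Fin d2) (Fin k) ℝ) :
    |∑ i, ∑ j, A i j * (U * Vᵀ) i j| ≤ rowMaxNorm U * rowMaxNorm V * grothendieckNorm A := by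
  have pairing_eq : ∑ i, ∑ j, A i j * (U * Vᵀ) i j
      = gramPairing A (fun i ↦ WithLp.toLp 2 (U i)) fun j ↦ WithLp.toLp 2 (V j) := by
    simp [gramPairing, Matrix.mul_apply, PiLp.inner_apply, mul_comm]
  rw [pairing_eq]
  exact abs_gramPairing_le A (rowMaxNorm_nonneg U) (rowMaxNorm_nonneg V)
    (norm_row_le_rowMaxNorm U) (norm_row_le_rowMaxNorm V)

lemma abs_sum_mul_le_maxNorm_mul_grothendieckNorm (hd2 : 0 < d2)
    (A M : Matrix (Fin d1) (Fin d2) ℝ) :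
    |∑ i, ∑ j, A i j * M i j| ≤ maxNorm M * grothendieckNorm A := by
  let products := {c : ℝ | ∃ (k : ℕ) (U : Matrix (Fin d1) (Fin k) ℝ)
    (V : Matrix (Fin d2) (Fin k) ℝ), 0 < k ∧ M = U * Vᵀ ∧ c = rowMaxNorm U * rowMaxNorm V}
  have products_nonempty : products.Nonempty := ⟨_, d2, M, 1, hd2, by simp, rfl⟩
  have le_product : ∀ c ∈ products, |∑ i, ∑ j, A i j * M i j| ≤ c * grothendieckNorm A := by
    rintro _ ⟨k, U, V, -, rfl, rfl⟩
    exact abs_sum_mul_le_of_factorization A U V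
  rcases (grothendieckNorm_nonneg A).eq_or_lt with norm_zero | norm_pos
  · obtain ⟨c, hc⟩ := products_nonempty
    simpa only [← norm_zero, mul_zero] using le_product c hc
  · rw [← div_le_iff₀ norm_pos]
    exact le_csInf products_nonempty fun c hc ↦ (div_le_iff₀ norm_pos).mpr (le_product c hc)

end MaxNorm

section SampleMatrix

variable {ι κ : Type*} [DecidableEq ι] [DecidableEq κ] {n : ℕ}

/-- The matrix `∑ₜ xₜ e_{iₜ} e_{jₜ}ᵀ` of the weighted index pairs `S t = (iₜ, jₜ)`. -/
def sampleMatrix (S : Fin n → ι × κ) (x : Fin n → ℝ) : Matrix ι κ ℝ :=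
  ∑ t, Matrix.single (S t).1 (S t).2 (x t)

variable [Fintype ι] [Fintype κ]

lemma sum_sampleMatrix_mul (S : Fin n → ι × κ) (x : Fin n → ℝ) (M : Matrix ι κ ℝ) :
    ∑ i, ∑ j, sampleMatrix S x i j * M i j = ∑ t, x t * M (S t).1 (S t).2 := by
  simp only [sampleMatrix, Matrix.sum_apply, Finset.sum_mul]
  simp_rw [Finset.sum_comm (s := Finset.univ (α := κ)) (t := Finset.univ (α := Fin n))]
  rw [Finset.sum_comm]
  refine Finset.sum_congr rfl fun t _ ↦ ?_
  simp [Matrix.single_apply, ite_and]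

lemma dotProduct_sampleMatrix_mulVec (S : Fin n → ι × κ) (x : Fin n → ℝ) (a : ι → ℝ)
    (b : κ → ℝ) :
    a ⬝ᵥ sampleMatrix S x *ᵥ b = ∑ t, x t * (a (S t).1 * b (S t).2) := by
  refine Eq.trans ?_ (sum_sampleMatrix_mul S x fun i j ↦ a i * b j)
  simp only [dotProduct, mulVec, Finset.mul_sum]
  exact Finset.sum_congr rfl fun i _ ↦ Finset.sum_congr rfl fun j _ ↦ by ring

end SampleMatrix

lemma sum_mul_sub_le_inftyOneNorm_sampleMatrix {d1 d2 n : ℕ} (hd2 : 0 < d2) {R : ℝ}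
    {M M' : Matrix (Fin d1) (Fin d2) ℝ} (hM : maxNorm M ≤ R) (hM' : maxNorm M' ≤ R)
    (S : Fin n → Fin d1 × Fin d2) (x : Fin n → ℝ) :
    ∑ t, x t * (M (S t).1 (S t).2 - M' (S t).1 (S t).2)
      ≤ 192 * R * inftyOneNorm (sampleMatrix S x) := by
  have single_le {N : Matrix (Fin d1) (Fin d2) ℝ} (hN : maxNorm N ≤ R) :
      |∑ t, x t * N (S t).1 (S t).2| ≤ R * grothendieckNorm (sampleMatrix S x) := by
    rw [← sum_sampleMatrix_mul]
    refine (abs_sum_mul_le_maxNorm_mul_grothendieckNorm hd2 _ N).trans ?_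
    gcongr
    exact grothendieckNorm_nonneg _
  have R_nonneg : 0 ≤ R := (maxNorm_nonneg M).trans hM
  calc ∑ t, x t * (M (S t).1 (S t).2 - M' (S t).1 (S t).2)
      = ∑ t, x t * M (S t).1 (S t).2 - ∑ t, x t * M' (S t).1 (S t).2 := by
        simp only [mul_sub, Finset.sum_sub_distrib]
    _ ≤ |∑ t, x t * M (S t).1 (S t).2| + |∑ t, x t * M' (S t).1 (S t).2| := by
        linarith [le_abs_self (∑ t, x t * M (S t).1 (S t).2),
          neg_le_abs (∑ t, x t * M' (S t).1 (S t).2)]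
    _ ≤ 2 * R * grothendieckNorm (sampleMatrix S x) := by linarith [single_le hM, single_le hM']
    _ ≤ 2 * R * (96 * inftyOneNorm (sampleMatrix S x)) := by
        gcongr
        exact grothendieckNorm_le_inftyOneNorm _
    _ = 192 * R * inftyOneNorm (sampleMatrix S x) := by ring

/-! ### Symmetrization and contraction -/

section Contraction

variable {G : ℝ → ℝ}

lemma apply_add_apply_reflect_le (hG : ConvexOn ℝ Set.univ G) {Q P x : ℝ}
    (hx : x ∈ Set.Icc Q P) : G x + G (P + Q - x) ≤ G P + G Q := by
  obtain ⟨a, b, ha, hb, hab, rfl⟩ := (Convex.mem_Icc (hx.1.trans hx.2)).mp hx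
  have reflect_eq : P + Q - (a * Q + b * P) = b * Q + a * P := by linear_combination -(P + Q) * hab
  have at_point := hG.2 (Set.mem_univ Q) (Set.mem_univ P) ha hb hab
  have at_reflection := hG.2 (Set.mem_univ Q) (Set.mem_univ P) hb ha (by linarith)
  simp only [smul_eq_mul] at at_point at_reflection
  rw [reflect_eq]
  calc G (a * Q + b * P) + G (b * Q + a * P)
      ≤ (a + b) * G Q + (a + b) * G P := by linarith
    _ = G P + G Q := by rw [hab]; ring

/-- Weak majorization for pairs. -/
lemma apply_add_apply_le_of_le_max_of_add_le (hG : ConvexOn ℝ Set.univ G) (hmono : Monotone G)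
    {s t P Q : ℝ} (hs : s ≤ max P Q) (ht : t ≤ max P Q) (hst : s + t ≤ P + Q) :
    G s + G t ≤ G P + G Q := by
  wlog hPQ : Q ≤ P generalizing P Q
  · rw [add_comm (G P)]
    exact this (max_comm P Q ▸ hs) (max_comm P Q ▸ ht) (add_comm P Q ▸ hst) (not_le.mp hPQ).le
  wlog hts : t ≤ s generalizing s t
  · rw [add_comm (G s)]
    exact this ht hs (add_comm s t ▸ hst) (not_le.mp hts).le
  rw [max_eq_left hPQ] at hs
  rcases le_total s Q with hsQ | hQs
  · exact add_comm (G P) (G Q) ▸ add_le_add (hmono hsQ) (hmono ((hts.trans hsQ).trans hPQ))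
  · calc G s + G t ≤ G s + G (P + Q - s) := by gcongr; exact hmono (by linarith)
      _ ≤ G P + G Q := apply_add_apply_reflect_le hG ⟨hQs, hs⟩

variable {ι : Type*} [Finite ι] [Nonempty ι]

/-- A single step of the Ledoux–Talagrand comparison of Rademacher processes. -/
lemma apply_iSup_add_add_apply_iSup_sub_le (hG : ConvexOn ℝ Set.univ G) (hmono : Monotone G)
    {h x : ι → ℝ} (hx : ∀ i, |h i| ≤ |x i|) (hsub : ∀ i j, |h i - h j| ≤ |x i - x j|)
    (a : ι → ℝ) :
    G (⨆ i, (a i + h i)) + G (⨆ i, (a i - h i))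
      ≤ G (⨆ i, (a i + x i)) + G (⨆ i, (a i - x i)) := by
  have plus_ge (i : ι) := Finite.le_ciSup (fun i ↦ a i + x i) i
  have minus_ge (i : ι) := Finite.le_ciSup (fun i ↦ a i - x i) i
  have add_abs_le_max (i : ι) : a i + |x i| ≤ max (⨆ i, (a i + x i)) (⨆ i, (a i - x i)) := by
    rcases abs_choice (x i) with habs | habs <;> rw [habs]
    · exact (plus_ge i).trans (le_max_left _ _)
    · exact (minus_ge i).trans (le_max_right _ _)
  have sum_le (i j : ι) :
      (a i + h i) + (a j - h j) ≤ (⨆ i, (a i + x i)) + (⨆ i, (a i - x i)) := by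
    have h_sub_le := (le_abs_self _).trans (hsub i j)
    rcases abs_choice (x i - x j) with habs | habs <;> rw [habs] at h_sub_le
    · linarith [plus_ge i, minus_ge j]
    · linarith [plus_ge j, minus_ge i]
  obtain ⟨p, hp⟩ := exists_eq_ciSup_of_finite (f := fun i ↦ a i + h i)
  obtain ⟨q, hq⟩ := exists_eq_ciSup_of_finite (f := fun i ↦ a i - h i)
  rw [← hp, ← hq]
  refine apply_add_apply_le_of_le_max_of_add_le hG hmono ?_ ?_ (sum_le p q)
  · linarith [add_abs_le_max p, le_abs_self (h p), hx p]
  · linarith [add_abs_le_max q, neg_le_abs (h q), hx q]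

lemma convexOn_apply_iSup (hG : ConvexOn ℝ Set.univ G) (hmono : Monotone G) :
    ConvexOn ℝ Set.univ fun u : ι → ℝ ↦ G (⨆ i, u i) := by
  refine ⟨convex_univ, fun u _ v _ a b ha hb hab ↦ ?_⟩
  calc G (⨆ i, (a • u + b • v) i) ≤ G (a • (⨆ i, u i) + b • ⨆ i, v i) := by
        refine hmono (ciSup_le fun i ↦ ?_)
        simp only [Pi.add_apply, Pi.smul_apply, smul_eq_mul]
        gcongr
        · exact Finite.le_ciSup u i
        · exact Finite.le_ciSup v i
    _ ≤ a • G (⨆ i, u i) + b • G (⨆ i, v i) := hG.2 trivial trivial ha hb hab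

end Contraction

section Symmetrization

variable {Ω E : Type*} [Fintype Ω] [AddCommGroup E] [Module ℝ E] {p : Ω → ℝ}

lemma sum_smul_sub_le_symmetrized (hp : ∀ w, 0 ≤ p w) (hp1 : ∑ w, p w = 1) {Ψ : E → ℝ}
    (hΨ : ConvexOn ℝ Set.univ Ψ) (h : Ω → E) (a : E) :
    ∑ w, p w * Ψ (a + (∑ v, p v • h v - h w))
      ≤ ∑ w, p w * ((Ψ (a + 2 • h w) + Ψ (a - 2 • h w)) / 2) := by
  have jensen (w : Ω) :
      Ψ (a + (∑ v, p v • h v - h w)) ≤ ∑ v, p v * Ψ (a + (h v - h w)) := by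
    have average_eq : a + (∑ v, p v • h v - h w) = ∑ v, p v • (a + (h v - h w)) := by
      simp only [smul_add, smul_sub, Finset.sum_add_distrib, Finset.sum_sub_distrib,
        ← Finset.sum_smul, hp1, one_smul]
    rw [average_eq]
    exact hΨ.map_sum_le (fun v _ ↦ hp v) hp1 fun v _ ↦ Set.mem_univ _
  have midpoint (v w : Ω) :
      Ψ (a + (h v - h w)) ≤ (Ψ (a + 2 • h v) + Ψ (a - 2 • h w)) / 2 := by
    have midpoint_eq :
        a + (h v - h w) = (1 / 2 : ℝ) • (a + 2 • h v) + (1 / 2 : ℝ) • (a - 2 • h w) := by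
      module
    rw [midpoint_eq]
    refine (hΨ.2 trivial trivial (by norm_num) (by norm_num) (by norm_num)).trans_eq ?_
    simp only [smul_eq_mul]
    ring
  calc ∑ w, p w * Ψ (a + (∑ v, p v • h v - h w))
      ≤ ∑ w, p w * ∑ v, p v * ((Ψ (a + 2 • h v) + Ψ (a - 2 • h w)) / 2) := by
        refine Finset.sum_le_sum fun w _ ↦ mul_le_mul_of_nonneg_left ?_ (hp w)
        exact (jensen w).trans <| Finset.sum_le_sum fun v _ ↦
          mul_le_mul_of_nonneg_left (midpoint v w) (hp v)
    _ = (∑ v, p v * Ψ (a + 2 • h v) + ∑ w, p w * Ψ (a - 2 • h w)) / 2 := by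
        simp only [mul_div_assoc', mul_add, ← Finset.sum_div, Finset.sum_add_distrib,
          ← Finset.sum_mul, hp1, one_mul]
    _ = ∑ w, p w * ((Ψ (a + 2 • h w) + Ψ (a - 2 • h w)) / 2) := by
        simp only [mul_div_assoc', mul_add, ← Finset.sum_div, Finset.sum_add_distrib]

end Symmetrization

lemma sum_prod_apply_add_sum_le_of_forall {Ω Ω' V : Type*} [Fintype Ω] [Fintype Ω']
    [AddCommMonoid V] {p : Ω → ℝ} {q : Ω' → ℝ} (hp : ∀ w, 0 ≤ p w) (hq : ∀ v, 0 ≤ q v)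
    {Φ : V → ℝ} {g : Ω → V} {g' : Ω' → V}
    (hle : ∀ a, ∑ w, p w * Φ (a + g w) ≤ ∑ v, q v * Φ (a + g' v)) (n : ℕ) (a : V) :
    ∑ w : Fin n → Ω, (∏ t, p (w t)) * Φ (a + ∑ t, g (w t))
      ≤ ∑ v : Fin n → Ω', (∏ t, q (v t)) * Φ (a + ∑ t, g' (v t)) := by
  induction n generalizing a with
  | zero => simp
  | succ n ih =>
    simp only [sum_fin_succ_pi, Fin.prod_univ_succ, Fin.sum_univ_succ, Fin.cons_zero,
      Fin.cons_succ, mul_assoc, ← Finset.mul_sum]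
    calc ∑ ω, p ω * ∑ w : Fin n → Ω, (∏ t, p (w t)) * Φ (a + (g ω + ∑ t, g (w t)))
        ≤ ∑ ω, p ω * ∑ v : Fin n → Ω', (∏ t, q (v t)) * Φ (a + (g ω + ∑ t, g' (v t))) := by
          refine Finset.sum_le_sum fun ω _ ↦ mul_le_mul_of_nonneg_left ?_ (hp ω)
          simpa only [add_assoc] using ih (a + g ω)
      _ = ∑ v : Fin n → Ω', (∏ t, q (v t)) *
            ∑ ω, p ω * Φ (a + ∑ t, g' (v t) + g ω) := by
          simp only [Finset.mul_sum]
          rw [Finset.sum_comm]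
          refine Finset.sum_congr rfl fun v _ ↦ Finset.sum_congr rfl fun ω _ ↦ ?_
          rw [mul_left_comm, add_assoc, add_comm (g ω)]
      _ ≤ ∑ v : Fin n → Ω', (∏ t, q (v t)) *
            ∑ ω, q ω * Φ (a + ∑ t, g' (v t) + g' ω) := by
          refine Finset.sum_le_sum fun v _ ↦ mul_le_mul_of_nonneg_left (hle _) ?_
          exact Finset.prod_nonneg fun t _ ↦ hq _
      _ = ∑ ω, q ω * ∑ v : Fin n → Ω', (∏ t, q (v t)) * Φ (a + (g' ω + ∑ t, g' (v t))) := by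
          simp only [Finset.mul_sum]
          rw [Finset.sum_comm]
          refine Finset.sum_congr rfl fun v _ ↦ Finset.sum_congr rfl fun ω _ ↦ ?_
          rw [mul_left_comm, add_assoc, add_comm (g' v)]

lemma sum_prod_apply_iSup_centered_le {Ω ι : Type*} [Fintype Ω] [Finite ι] [Nonempty ι]
    {p : Ω → ℝ} (hp : ∀ w, 0 ≤ p w) (hp1 : ∑ w, p w = 1)
    {G : ℝ → ℝ} (hG : ConvexOn ℝ Set.univ G) (hmono : Monotone G) {h x : Ω → ι → ℝ}
    (hx : ∀ w i, |h w i| ≤ |x w i|) (hsub : ∀ w i j, |h w i - h w j| ≤ |x w i - x w j|) (n : ℕ) :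
    ∑ w : Fin n → Ω, (∏ t, p (w t)) * G (⨆ i, ∑ t, (∑ v, p v * h v i - h (w t) i))
      ≤ ∑ w : Fin n → Ω × Bool, (∏ t, p (w t).1 / 2) *
          G (⨆ i, ∑ t, 2 * (boolSign (w t).2 * x (w t).1 i)) := by
  have contraction (a : ι → ℝ) (w : Ω) :
      G (⨆ i, (a + 2 • h w) i) + G (⨆ i, (a - 2 • h w) i)
        ≤ G (⨆ i, (a + 2 • x w) i) + G (⨆ i, (a - 2 • x w) i) := by
    refine apply_iSup_add_add_apply_iSup_sub_le hG hmono (fun i ↦ ?_) (fun i j ↦ ?_) a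
    · simpa [abs_mul] using hx w i
    · simpa [← mul_sub, abs_mul] using hsub w i j
  have one_sample (a : ι → ℝ) :
      ∑ w, p w * G (⨆ i, (a + (∑ v, p v • h v - h w)) i)
        ≤ ∑ w : Ω × Bool, p w.1 / 2 * G (⨆ i, (a + (2 * boolSign w.2) • x w.1) i) :=
    calc ∑ w, p w * G (⨆ i, (a + (∑ v, p v • h v - h w)) i)
        ≤ ∑ w, p w * ((G (⨆ i, (a + 2 • h w) i) + G (⨆ i, (a - 2 • h w) i)) / 2) :=
          sum_smul_sub_le_symmetrized hp hp1 (convexOn_apply_iSup hG hmono) h a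
      _ ≤ ∑ w, p w * ((G (⨆ i, (a + 2 • x w) i) + G (⨆ i, (a - 2 • x w) i)) / 2) := by
          refine Finset.sum_le_sum fun w _ ↦ mul_le_mul_of_nonneg_left ?_ (hp w)
          exact div_le_div_of_nonneg_right (contraction a w) two_pos.le
      _ = ∑ w : Ω × Bool, p w.1 / 2 * G (⨆ i, (a + (2 * boolSign w.2) • x w.1) i) := by
          simp only [Fintype.sum_prod_type, Fintype.sum_bool]
          refine Finset.sum_congr rfl fun w _ ↦ ?_
          simp only [boolSign_true, boolSign_false, mul_one, mul_neg, neg_smul, ← sub_eq_add_neg,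
            ofNat_smul_eq_nsmul]
          ring
  have half_nonneg (w : Ω × Bool) : 0 ≤ p w.1 / 2 := div_nonneg (hp w.1) two_pos.le
  simpa only [zero_add, Finset.sum_apply, Pi.sub_apply, Pi.smul_apply, smul_eq_mul, mul_assoc]
    using sum_prod_apply_add_sum_le_of_forall (Φ := fun u : ι → ℝ ↦ G (⨆ i, u i)) hp half_nonneg
      one_sample n 0

section SignedSamples

variable {Ω : Type*} [Fintype Ω] {p : Ω → ℝ} {n : ℕ}

lemma sum_prod_exp_sum_boolSign_mul_eq (hp1 : ∑ w, p w = 1) {σ : Ω → ℝ} (hσ : ∀ w, |σ w| = 1)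
    (c : ℝ) :
    ∑ w : Fin n → Ω × Bool, (∏ t, p (w t).1 / 2) *
        Real.exp (c * ∑ t, boolSign (w t).2 * σ (w t).1) = Real.cosh c ^ n := by
  have cosh_eq (w : Ω) : Real.cosh (c * σ w) = Real.cosh c := by
    rw [← Real.cosh_abs, abs_mul, hσ, mul_one, Real.cosh_abs]
  have one_sample :
      ∑ w : Ω × Bool, p w.1 / 2 * Real.exp (c * (boolSign w.2 * σ w.1)) = Real.cosh c := by
    calc ∑ w : Ω × Bool, p w.1 / 2 * Real.exp (c * (boolSign w.2 * σ w.1))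
        = ∑ w, p w * Real.cosh (c * σ w) := by
          simp only [Fintype.sum_prod_type, Fintype.sum_bool, boolSign_true, boolSign_false,
            one_mul, neg_mul, mul_neg, Real.cosh_eq]
          exact Finset.sum_congr rfl fun w _ ↦ by ring
      _ = Real.cosh c := by simp only [cosh_eq, ← Finset.sum_mul, hp1, one_mul]
  rw [← one_sample, Fintype.sum_pow]
  simp only [Finset.mul_sum, Real.exp_sum, Finset.prod_mul_distrib]

lemma sum_prod_exp_inftyOneNorm_le {ι κ : Type*} [Fintype ι] [Fintype κ] [DecidableEq ι]
    [DecidableEq κ] (hp : ∀ w, 0 ≤ p w) (hp1 : ∑ w, p w = 1) (φ : Ω → ι × κ) (c : ℝ) :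
    ∑ w : Fin n → Ω × Bool, (∏ t, p (w t).1 / 2) *
        Real.exp (c * inftyOneNorm
          (sampleMatrix (fun t ↦ φ (w t).1) fun t ↦ boolSign (w t).2))
      ≤ 2 ^ (Fintype.card ι + Fintype.card κ) * Real.exp (n * (c ^ 2 / 2)) := by
  have exp_le_sum (A : Matrix ι κ ℝ) : Real.exp (c * inftyOneNorm A)
      ≤ ∑ st : (ι → Bool) × (κ → Bool),
          Real.exp (c * ((boolSign ∘ st.1) ⬝ᵥ A *ᵥ (boolSign ∘ st.2))) := by
    obtain ⟨st, hst⟩ := exists_eq_ciSup_of_finite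
      (f := fun st : (ι → Bool) × (κ → Bool) ↦ (boolSign ∘ st.1) ⬝ᵥ A *ᵥ (boolSign ∘ st.2))
    rw [inftyOneNorm, ← hst]
    exact Finset.single_le_sum (f := fun st : (ι → Bool) × (κ → Bool) ↦
      Real.exp (c * ((boolSign ∘ st.1) ⬝ᵥ A *ᵥ (boolSign ∘ st.2))))
      (fun _ _ ↦ (Real.exp_pos _).le) (Finset.mem_univ st)
  have abs_sign_mul_sign (st : (ι → Bool) × (κ → Bool)) (w : Ω) :
      |boolSign (st.1 (φ w).1) * boolSign (st.2 (φ w).2)| = 1 := by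
    rw [abs_mul, abs_boolSign, abs_boolSign, one_mul]
  calc ∑ w : Fin n → Ω × Bool, (∏ t, p (w t).1 / 2) *
        Real.exp (c * inftyOneNorm (sampleMatrix (fun t ↦ φ (w t).1) fun t ↦ boolSign (w t).2))
      ≤ ∑ w : Fin n → Ω × Bool, (∏ t, p (w t).1 / 2) * ∑ st : (ι → Bool) × (κ → Bool),
          Real.exp (c * ∑ t, boolSign (w t).2 *
            (boolSign (st.1 (φ (w t).1).1) * boolSign (st.2 (φ (w t).1).2))) := by
        refine Finset.sum_le_sum fun w _ ↦ mul_le_mul_of_nonneg_left ?_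
          (Finset.prod_nonneg fun t _ ↦ div_nonneg (hp _) two_pos.le)
        simpa only [dotProduct_sampleMatrix_mulVec, Function.comp_apply] using exp_le_sum
          (sampleMatrix (fun t ↦ φ (w t).1) fun t ↦ boolSign (w t).2)
    _ = ∑ _st : (ι → Bool) × (κ → Bool), Real.cosh c ^ n := by
        simp only [Finset.mul_sum (s := (Finset.univ : Finset ((ι → Bool) × (κ → Bool))))]
        rw [Finset.sum_comm]
        exact Finset.sum_congr rfl fun st _ ↦
          sum_prod_exp_sum_boolSign_mul_eq hp1 (abs_sign_mul_sign st) c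
    _ = 2 ^ (Fintype.card ι + Fintype.card κ) * Real.cosh c ^ n := by
        simp [pow_add]
    _ ≤ 2 ^ (Fintype.card ι + Fintype.card κ) * Real.exp (n * (c ^ 2 / 2)) := by
        rw [Real.exp_nat_mul]
        gcongr
        exact Real.cosh_le_exp_half_sq c

end SignedSamples

/-! ### The logarithmic loss -/

/-- The loss `-log P(b)` incurred at the outcome `b` by predicting `true` with probability `p`. -/
noncomputable def logLoss (p : ℝ) (b : Bool) : ℝ :=
  if b then Real.log (1 / p) else Real.log (1 / (1 - p))

/-- The Kullback–Leibler divergence between the Bernoulli laws of parameters `p` and `q`. -/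
noncomputable def bernoulliKL (p q : ℝ) : ℝ :=
  p * (logLoss q true - logLoss p true) + (1 - p) * (logLoss q false - logLoss p false)

/-- The variance-stabilizing transform of the Bernoulli family. -/
noncomputable def arcsinSqrt (p : ℝ) : ℝ := Real.arcsin √p

section Bernoulli

variable {p q : ℝ}

lemma exists_hasDerivAt_logLoss (hp : p ∈ Set.Ioo 0 1) (b : Bool) :
    ∃ d, HasDerivAt (fun p ↦ logLoss p b) d p ∧ |d| ≤ 1 / (p * (1 - p)) := by
  obtain ⟨p_pos, p_lt_one⟩ := hp
  have compl_pos : 0 < 1 - p := sub_pos.mpr p_lt_one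
  cases b with
  | true =>
    refine ⟨-p⁻¹, ?_, ?_⟩
    · simpa [logLoss] using (Real.hasDerivAt_log p_pos.ne').fun_neg
    · rw [abs_neg, abs_inv, abs_of_pos p_pos, ← one_div]
      gcongr
      exact mul_le_of_le_one_right p_pos.le (by linarith)
  | false =>
    refine ⟨(1 - p)⁻¹, ?_, ?_⟩
    · simpa [logLoss, neg_div] using
        (((hasDerivAt_id p).const_sub 1).log compl_pos.ne').fun_neg
    · rw [abs_inv, abs_of_pos compl_pos, ← one_div]
      gcongr
      exact mul_le_of_le_one_left compl_pos.le p_lt_one.le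

lemma hasDerivAt_arcsinSqrt (hp : p ∈ Set.Ioo 0 1) :
    HasDerivAt arcsinSqrt (1 / (2 * √(p * (1 - p)))) p := by
  obtain ⟨p_pos, p_lt_one⟩ := hp
  have sqrt_pos : 0 < √p := Real.sqrt_pos.mpr p_pos
  have sqrt_lt_one : √p < 1 := by rwa [Real.sqrt_lt' one_pos, one_pow]
  refine ((Real.hasDerivAt_arcsin (by linarith) sqrt_lt_one.ne).comp p
    (Real.hasDerivAt_sqrt p_pos.ne')).congr_deriv ?_
  rw [Real.sq_sqrt p_pos.le, Real.sqrt_mul p_pos.le, div_mul_div_comm]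
  ring

lemma cos_arcsinSqrt_sub (hp : p ∈ Set.Icc 0 1) (hq : q ∈ Set.Icc 0 1) :
    Real.cos (arcsinSqrt p - arcsinSqrt q) = √p * √q + √(1 - p) * √(1 - q) := by
  have sin_eq {r : ℝ} (hr : r ∈ Set.Icc 0 1) : Real.sin (arcsinSqrt r) = √r :=
    Real.sin_arcsin (by linarith [Real.sqrt_nonneg r]) (Real.sqrt_le_one.mpr hr.2)
  have cos_eq {r : ℝ} (hr : r ∈ Set.Icc 0 1) : Real.cos (arcsinSqrt r) = √(1 - r) := by
    rw [arcsinSqrt, Real.cos_arcsin, Real.sq_sqrt hr.1]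
  rw [Real.cos_sub, sin_eq hp, sin_eq hq, cos_eq hp, cos_eq hq, add_comm]

lemma two_mul_sub_sqrt_mul_sqrt_le (hp : 0 < p) (hq : 0 < q) :
    2 * (p - √p * √q) ≤ p * (Real.log (1 / q) - Real.log (1 / p)) := by
  have sqrt_p_pos := Real.sqrt_pos.mpr hp
  have sqrt_q_pos := Real.sqrt_pos.mpr hq
  have log_ratio_le : (Real.log q - Real.log p) / 2 ≤ √q / √p - 1 := by
    have h := Real.log_le_sub_one_of_pos (div_pos sqrt_q_pos sqrt_p_pos)
    rwa [Real.log_div sqrt_q_pos.ne' sqrt_p_pos.ne', Real.log_sqrt hq.le, Real.log_sqrt hp.le,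
      ← sub_div] at h
  have mul_ratio : p * (√q / √p) = √p * √q := by
    rw [mul_div_left_comm, Real.div_sqrt, mul_comm]
  rw [one_div, one_div, Real.log_inv, Real.log_inv]
  linarith [mul_le_mul_of_nonneg_left log_ratio_le hp.le]

/-- The divergence dominates the squared Hellinger distance, which is `2 (1 - cos δ)` for the
difference `δ` of the transformed parameters. -/
lemma sq_arcsinSqrt_sub_le_bernoulliKL (hp : p ∈ Set.Ioo 0 1) (hq : q ∈ Set.Ioo 0 1) :
    4 / Real.pi ^ 2 * (arcsinSqrt p - arcsinSqrt q) ^ 2 ≤ bernoulliKL p q := by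
  have abs_sub_le_pi : |arcsinSqrt p - arcsinSqrt q| ≤ Real.pi := by
    unfold arcsinSqrt
    rw [abs_le]
    constructor <;> linarith [Real.arcsin_le_pi_div_two √p, Real.arcsin_le_pi_div_two √q,
      Real.neg_pi_div_two_le_arcsin √p, Real.neg_pi_div_two_le_arcsin √q]
  calc 4 / Real.pi ^ 2 * (arcsinSqrt p - arcsinSqrt q) ^ 2
      ≤ 2 * (1 - Real.cos (arcsinSqrt p - arcsinSqrt q)) := by
        rw [show 4 / Real.pi ^ 2 = 2 * (2 / Real.pi ^ 2) by ring]
        linarith [Real.cos_le_one_sub_mul_cos_sq abs_sub_le_pi]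
    _ = 2 * (p - √p * √q) + 2 * ((1 - p) - √(1 - p) * √(1 - q)) := by
        rw [cos_arcsinSqrt_sub (Set.Ioo_subset_Icc_self hp) (Set.Ioo_subset_Icc_self hq)]
        ring
    _ ≤ bernoulliKL p q :=
        add_le_add (two_mul_sub_sqrt_mul_sqrt_le hp.1 hq.1)
          (two_mul_sub_sqrt_mul_sqrt_le (sub_pos.mpr hp.2) (sub_pos.mpr hq.2))

end Bernoulli

section Link

variable {F : ℝ → ℝ} {s : Set ℝ}

lemma abs_logLoss_sub_le (hs : Convex ℝ s) (hd : ∀ x ∈ s, DifferentiableAt ℝ F x)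
    (hF : ∀ x ∈ s, F x ∈ Set.Ioo 0 1) {L : ℝ}
    (hL : ∀ x ∈ s, |deriv F x| / (F x * (1 - F x)) ≤ L) (b : Bool)
    {x y : ℝ} (hx : x ∈ s) (hy : y ∈ s) :
    |logLoss (F x) b - logLoss (F y) b| ≤ L * |x - y| := by
  have exists_deriv (z : ℝ) (hz : z ∈ s) :
      ∃ d, HasDerivAt (fun x ↦ logLoss (F x) b) d z ∧ |d| ≤ L := by
    obtain ⟨d, hderiv, hle⟩ := exists_hasDerivAt_logLoss (hF z hz) b
    refine ⟨d * deriv F z, hderiv.comp z (hd z hz).hasDerivAt, ?_⟩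
    calc |d * deriv F z| ≤ 1 / (F z * (1 - F z)) * |deriv F z| := by rw [abs_mul]; gcongr
      _ = |deriv F z| / (F z * (1 - F z)) := one_div_mul_eq_div _ _
      _ ≤ L := hL z hz
  choose! f' hf' f'_le using exists_deriv
  exact hs.norm_image_sub_le_of_norm_hasDerivWithin_le
    (fun z hz ↦ (hf' z hz).hasDerivWithinAt) f'_le hy hx

lemma sq_sub_le_mul_sq_arcsinSqrt_sub (hs : s.OrdConnected)
    (hd : ∀ x ∈ s, DifferentiableAt ℝ F x) (hF : ∀ x ∈ s, F x ∈ Set.Ioo 0 1)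
    (hF' : ∀ x ∈ s, deriv F x ≠ 0) {β : ℝ}
    (hβ : ∀ x ∈ s, F x * (1 - F x) / deriv F x ^ 2 ≤ β) {x y : ℝ} (hx : x ∈ s) (hy : y ∈ s) :
    (x - y) ^ 2 ≤ 4 * β * (arcsinSqrt (F x) - arcsinSqrt (F y)) ^ 2 := by
  wlog hxy : y < x generalizing x y
  · rcases (not_lt.mp hxy).eq_or_lt with rfl | hlt
    · simp
    · rw [sub_sq_comm x, sub_sq_comm (arcsinSqrt (F x))]
      exact this hy hx hlt
  have deriv_eq (z : ℝ) (hz : z ∈ Set.Icc y x) : HasDerivAt (fun x ↦ arcsinSqrt (F x))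
      (1 / (2 * √(F z * (1 - F z))) * deriv F z) z :=
    (hasDerivAt_arcsinSqrt (hF z (hs.out hy hx hz))).comp z (hd z (hs.out hy hx hz)).hasDerivAt
  obtain ⟨c, hc, slope_eq⟩ := exists_hasDerivAt_eq_slope _ _ hxy
    (fun z hz ↦ (deriv_eq z hz).continuousAt.continuousWithinAt)
    fun z hz ↦ deriv_eq z (Set.Ioo_subset_Icc_self hz)
  have c_mem : c ∈ s := hs.out hy hx (Set.Ioo_subset_Icc_self hc)
  have variance_pos : 0 < F c * (1 - F c) :=
    mul_pos (hF c c_mem).1 (sub_pos.mpr (hF c c_mem).2)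
  have deriv_sq_pos : 0 < deriv F c ^ 2 := sq_pos_of_ne_zero (hF' c c_mem)
  have increment_eq : arcsinSqrt (F x) - arcsinSqrt (F y)
      = 1 / (2 * √(F c * (1 - F c))) * deriv F c * (x - y) :=
    ((eq_div_iff (sub_pos.mpr hxy).ne').mp slope_eq).symm
  calc (x - y) ^ 2 ≤ β / (F c * (1 - F c) / deriv F c ^ 2) * (x - y) ^ 2 :=
        le_mul_of_one_le_left (sq_nonneg _)
          ((one_le_div (div_pos variance_pos deriv_sq_pos)).mpr (hβ c c_mem))
    _ = 4 * β * (arcsinSqrt (F x) - arcsinSqrt (F y)) ^ 2 := by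
        rw [increment_eq, mul_pow, mul_pow, div_pow, mul_pow, Real.sq_sqrt variance_pos.le]
        field_simp
        ring

lemma sq_sub_le_mul_bernoulliKL (hs : s.OrdConnected)
    (hd : ∀ x ∈ s, DifferentiableAt ℝ F x) (hF : ∀ x ∈ s, F x ∈ Set.Ioo 0 1)
    (hF' : ∀ x ∈ s, deriv F x ≠ 0) {β : ℝ}
    (hβ : ∀ x ∈ s, F x * (1 - F x) / deriv F x ^ 2 ≤ β) {x y : ℝ} (hx : x ∈ s) (hy : y ∈ s) :
    (x - y) ^ 2 ≤ Real.pi ^ 2 * β * bernoulliKL (F x) (F y) := by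
  have β_nonneg : 0 ≤ β :=
    (div_nonneg (mul_pos (hF x hx).1 (sub_pos.mpr (hF x hx).2)).le (sq_nonneg _)).trans (hβ x hx)
  calc (x - y) ^ 2 ≤ 4 * β * (arcsinSqrt (F x) - arcsinSqrt (F y)) ^ 2 :=
        sq_sub_le_mul_sq_arcsinSqrt_sub hs hd hF hF' hβ hx hy
    _ = Real.pi ^ 2 * β * (4 / Real.pi ^ 2 * (arcsinSqrt (F x) - arcsinSqrt (F y)) ^ 2) := by
        field_simp
    _ ≤ Real.pi ^ 2 * β * bernoulliKL (F x) (F y) := by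
        gcongr
        exact sq_arcsinSqrt_sub_le_bernoulliKL (hF x hx) (hF y hy)

end Link

/-! ### One-bit observations -/

section Observations

variable {d1 d2 n : ℕ} {F : ℝ → ℝ} {π : Fin d1 → Fin d2 → ℝ}
  {Mstar : Matrix (Fin d1) (Fin d2) ℝ}

/-- The probability of a single observation: an index pair together with its observed sign. -/
noncomputable def obsWeight (F : ℝ → ℝ) (π : Fin d1 → Fin d2 → ℝ)
    (Mstar : Matrix (Fin d1) (Fin d2) ℝ) (w : (Fin d1 × Fin d2) × Bool) : ℝ :=
  π w.1.1 w.1.2 * if w.2 then F (Mstar w.1.1 w.1.2) else 1 - F (Mstar w.1.1 w.1.2)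

/-- The logarithmic loss of the matrix `M` at an observation, relative to that of `Mstar`. -/
noncomputable def excessLoss (F : ℝ → ℝ) (Mstar M : Matrix (Fin d1) (Fin d2) ℝ)
    (w : (Fin d1 × Fin d2) × Bool) : ℝ :=
  logLoss (F (M w.1.1 w.1.2)) w.2 - logLoss (F (Mstar w.1.1 w.1.2)) w.2

lemma obsWeight_nonneg (hF : ∀ k l, F (Mstar k l) ∈ Set.Icc 0 1) (hπ : ∀ k l, 0 ≤ π k l)
    (w : (Fin d1 × Fin d2) × Bool) : 0 ≤ obsWeight F π Mstar w := by
  refine mul_nonneg (hπ _ _) ?_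
  split_ifs
  · exact (hF _ _).1
  · exact sub_nonneg.mpr (hF _ _).2

lemma sampleWeight_nonneg (hF : ∀ k l, F (Mstar k l) ∈ Set.Icc 0 1) (hπ : ∀ k l, 0 ≤ π k l)
    (S : Fin n → Fin d1 × Fin d2) (y : Fin n → Bool) : 0 ≤ sampleWeight F π Mstar S y :=
  Finset.prod_nonneg fun t _ ↦ obsWeight_nonneg hF hπ (S t, y t)

lemma sum_obsWeight_mul (F : ℝ → ℝ) (π : Fin d1 → Fin d2 → ℝ)
    (Mstar : Matrix (Fin d1) (Fin d2) ℝ) (f : (Fin d1 × Fin d2) × Bool → ℝ) :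
    ∑ w, obsWeight F π Mstar w * f w = ∑ k, ∑ l, π k l *
      (F (Mstar k l) * f ((k, l), true) + (1 - F (Mstar k l)) * f ((k, l), false)) := by
  simp only [Fintype.sum_prod_type, Fintype.sum_bool, obsWeight, if_true, Bool.false_eq_true,
    if_false, mul_add, mul_assoc]

lemma sum_obsWeight (hπ1 : ∑ k, ∑ l, π k l = 1) : ∑ w, obsWeight F π Mstar w = 1 := by
  simpa [hπ1] using sum_obsWeight_mul F π Mstar fun _ ↦ 1

lemma sum_prod_obsWeight (hπ1 : ∑ k, ∑ l, π k l = 1) :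
    ∑ w : Fin n → (Fin d1 × Fin d2) × Bool, ∏ t, obsWeight F π Mstar (w t) = 1 := by
  rw [← Fintype.sum_pow, sum_obsWeight hπ1, one_pow]

lemma sum_obsWeight_mul_excessLoss (F : ℝ → ℝ) (π : Fin d1 → Fin d2 → ℝ)
    (Mstar M : Matrix (Fin d1) (Fin d2) ℝ) :
    ∑ w, obsWeight F π Mstar w * excessLoss F Mstar M w
      = ∑ k, ∑ l, π k l * bernoulliKL (F (Mstar k l)) (F (M k l)) :=
  sum_obsWeight_mul F π Mstar _

lemma sum_excessLoss_eq_negLogLik_sub (F : ℝ → ℝ) (Mstar M : Matrix (Fin d1) (Fin d2) ℝ)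
    (S : Fin n → Fin d1 × Fin d2) (y : Fin n → Bool) :
    ∑ t, excessLoss F Mstar M (S t, y t) = negLogLik F S y M - negLogLik F S y Mstar :=
  Finset.sum_sub_distrib _ _

lemma frobeniusNorm_sq_div_le_mul_sum_excessLoss {s : Set ℝ} (hs : s.OrdConnected)
    (hd : ∀ x ∈ s, DifferentiableAt ℝ F x) (hF : ∀ x ∈ s, F x ∈ Set.Ioo 0 1)
    (hF' : ∀ x ∈ s, deriv F x ≠ 0) {β : ℝ}
    (hβ : ∀ x ∈ s, F x * (1 - F x) / deriv F x ^ 2 ≤ β) {μ : ℝ} (hμ : 0 < μ)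
    (hπ : ∀ k l, 1 / (μ * d1 * d2) ≤ π k l) {M : Matrix (Fin d1) (Fin d2) ℝ}
    (hMstar : ∀ k l, Mstar k l ∈ s) (hM : ∀ k l, M k l ∈ s) :
    frobeniusNorm (M - Mstar) ^ 2 / (d1 * d2)
      ≤ Real.pi ^ 2 * μ * β * ∑ w, obsWeight F π Mstar w * excessLoss F Mstar M w := by
  have entry_le (k : Fin d1) (l : Fin d2) : (M - Mstar) k l ^ 2 / (d1 * d2)
      ≤ Real.pi ^ 2 * μ * β * (π k l * bernoulliKL (F (Mstar k l)) (F (M k l))) := by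
    have sq_le := sq_sub_le_mul_bernoulliKL hs hd hF hF' hβ (hMstar k l) (hM k l)
    have π_nonneg : 0 ≤ π k l := le_trans (by positivity) (hπ k l)
    calc (M - Mstar) k l ^ 2 / (d1 * d2)
        = μ * (1 / (μ * d1 * d2)) * (Mstar k l - M k l) ^ 2 := by
          rw [Matrix.sub_apply, sub_sq_comm]
          field_simp
      _ ≤ μ * π k l * (Real.pi ^ 2 * β * bernoulliKL (F (Mstar k l)) (F (M k l))) := by
          gcongr
          exact hπ k l
      _ = Real.pi ^ 2 * μ * β * (π k l * bernoulliKL (F (Mstar k l)) (F (M k l))) := by ring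
  rw [frobeniusNorm, Real.sq_sqrt (by positivity), sum_obsWeight_mul_excessLoss]
  simp only [Finset.sum_div, Finset.mul_sum]
  exact Finset.sum_le_sum fun k _ ↦ Finset.sum_le_sum fun l _ ↦ entry_le k l

lemma sum_two_mul_mul_le_inftyOneNorm_sampleMatrix (hd2 : 0 < d2) {L R : ℝ} (hL : 0 ≤ L)
    {M M' : Matrix (Fin d1) (Fin d2) ℝ} (hM : maxNorm M ≤ R) (hM' : maxNorm M' ≤ R)
    (S : Fin n → Fin d1 × Fin d2) (x : Fin n → ℝ) :
    ∑ t, 2 * (x t * (L * (M (S t).1 (S t).2 - M' (S t).1 (S t).2)))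
      ≤ 384 * L * R * inftyOneNorm (sampleMatrix S x) := by
  calc ∑ t, 2 * (x t * (L * (M (S t).1 (S t).2 - M' (S t).1 (S t).2)))
      = 2 * L * ∑ t, x t * (M (S t).1 (S t).2 - M' (S t).1 (S t).2) := by
        rw [Finset.mul_sum]
        exact Finset.sum_congr rfl fun t _ ↦ by ring
    _ ≤ 2 * L * (192 * R * inftyOneNorm (sampleMatrix S x)) := by
        gcongr
        exact sum_mul_sub_le_inftyOneNorm_sampleMatrix hd2 hM hM' S x
    _ = 384 * L * R * inftyOneNorm (sampleMatrix S x) := by ring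

lemma sum_prod_obsWeight_mul_exp_iSup_excessLoss_le {s : Set ℝ} (hs : Convex ℝ s)
    (hd : ∀ x ∈ s, DifferentiableAt ℝ F x) (hF : ∀ x ∈ s, F x ∈ Set.Ioo 0 1) {L : ℝ}
    (hL0 : 0 ≤ L) (hL : ∀ x ∈ s, |deriv F x| / (F x * (1 - F x)) ≤ L) (hd2 : 0 < d2)
    (hπ : ∀ k l, 0 ≤ π k l) (hπ1 : ∑ k, ∑ l, π k l = 1) {R : ℝ}
    (hMstar : ∀ k l, Mstar k l ∈ s) (hMstarR : maxNorm Mstar ≤ R)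
    {ι : Type*} [Finite ι] [Nonempty ι] {M : ι → Matrix (Fin d1) (Fin d2) ℝ}
    (hM : ∀ i k l, M i k l ∈ s) (hMR : ∀ i, maxNorm (M i) ≤ R) {c : ℝ} (hc : 0 ≤ c) :
    ∑ w : Fin n → (Fin d1 × Fin d2) × Bool, (∏ t, obsWeight F π Mstar (w t)) *
        Real.exp (c * ⨆ i, ∑ t, (∑ v, obsWeight F π Mstar v * excessLoss F Mstar (M i) v
          - excessLoss F Mstar (M i) (w t)))
      ≤ 2 ^ (d1 + d2) * Real.exp (n * ((c * (384 * L * R)) ^ 2 / 2)) := by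
  have weight_nonneg : ∀ w, 0 ≤ obsWeight F π Mstar w :=
    obsWeight_nonneg (fun k l ↦ Set.Ioo_subset_Icc_self (hF _ (hMstar k l))) hπ
  have exp_convex : ConvexOn ℝ Set.univ fun u ↦ Real.exp (c * u) :=
    convexOn_exp.comp_linearMap (LinearMap.mulLeft ℝ c)
  have exp_mono : Monotone fun u ↦ Real.exp (c * u) :=
    fun u v huv ↦ Real.exp_le_exp.mpr (mul_le_mul_of_nonneg_left huv hc)
  have lipschitz {x y : ℝ} (hx : x ∈ s) (hy : y ∈ s) (z : ℝ) (b : Bool) :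
      |logLoss (F x) b - logLoss (F y) b| ≤ |L * (x - z) - L * (y - z)| := by
    rw [← mul_sub, sub_sub_sub_cancel_right, abs_mul, abs_of_nonneg hL0]
    exact abs_logLoss_sub_le hs hd hF hL b hx hy
  refine (sum_prod_apply_iSup_centered_le weight_nonneg (sum_obsWeight hπ1) exp_convex exp_mono
    (h := fun w i ↦ excessLoss F Mstar (M i) w)
    (x := fun w i ↦ L * (M i w.1.1 w.1.2 - Mstar w.1.1 w.1.2)) (fun w i ↦ ?_)
    (fun w i j ↦ ?_) n).trans ?_
  · simpa only [excessLoss, sub_self, mul_zero, sub_zero] using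
      lipschitz (hM i w.1.1 w.1.2) (hMstar w.1.1 w.1.2) (Mstar w.1.1 w.1.2) w.2
  · rw [excessLoss, excessLoss, sub_sub_sub_cancel_right]
    exact lipschitz (hM i w.1.1 w.1.2) (hM j w.1.1 w.1.2) (Mstar w.1.1 w.1.2) w.2
  refine le_trans (Finset.sum_le_sum fun w _ ↦ mul_le_mul_of_nonneg_left ?_ ?_)
    ((sum_prod_exp_inftyOneNorm_le weight_nonneg (sum_obsWeight hπ1) Prod.fst
      (c * (384 * L * R))).trans_eq (by simp only [Fintype.card_fin]))
  · rw [Real.exp_le_exp, mul_assoc c]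
    gcongr
    exact ciSup_le fun i ↦ sum_two_mul_mul_le_inftyOneNorm_sampleMatrix hd2 hL0 (hMR i) hMstarR
      (fun t ↦ (w t).1.1) fun t ↦ boolSign (w t).2
  · exact Finset.prod_nonneg fun t _ ↦ div_nonneg (weight_nonneg _) two_pos.le

end Observations

/-! ### The maximum likelihood estimator -/

lemma one_sub_mul_exp_neg_le_sum_indicator {Γ : Type*} [Fintype Γ] {P Z : Γ → ℝ}
    (hP : ∀ w, 0 ≤ P w) (hP1 : ∑ w, P w = 1) {B : ℝ} (hB : ∑ w, P w * Real.exp (Z w) ≤ B)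
    {A : Set Γ} {τ : ℝ} (hA : ∀ w ∉ A, τ ≤ Z w) :
    1 - B * Real.exp (-τ) ≤ ∑ w, A.indicator P w := by
  have markov (w : Γ) : P w - A.indicator P w ≤ P w * Real.exp (Z w) * Real.exp (-τ) := by
    by_cases hw : w ∈ A
    · rw [Set.indicator_of_mem hw, sub_self]
      have := hP w
      positivity
    · rw [Set.indicator_of_notMem hw, sub_zero, mul_assoc, ← Real.exp_add]
      exact le_mul_of_one_le_right (hP w) (Real.one_le_exp (by linarith [hA w hw]))
  have summed := Finset.sum_le_sum fun w (_ : w ∈ Finset.univ) ↦ markov w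
  rw [Finset.sum_sub_distrib, hP1, ← Finset.sum_mul] at summed
  linarith [mul_le_mul_of_nonneg_right hB (Real.exp_pos (-τ)).le]

/-- The conditions on the link function `F`: on the set `s` it is differentiable with values in
`(0, 1)` and nonzero derivative, and `L`, `β` bound from above the suprema over `s` that the paper
calls the steepness `L_α` and the flatness `β_α`. -/
structure RegularLink (F : ℝ → ℝ) (s : Set ℝ) (L β : ℝ) : Prop where
  differentiableAt : ∀ x ∈ s, DifferentiableAt ℝ F x
  mem_Ioo : ∀ x ∈ s, F x ∈ Set.Ioo 0 1
  deriv_ne_zero : ∀ x ∈ s, deriv F x ≠ 0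
  steepness_le : ∀ x ∈ s, |deriv F x| / (F x * (1 - F x)) ≤ L
  flatness_le : ∀ x ∈ s, F x * (1 - F x) / deriv F x ^ 2 ≤ β

namespace RegularLink

variable {F : ℝ → ℝ} {s : Set ℝ} {L β x : ℝ}

lemma variance_pos (hF : RegularLink F s L β) (hx : x ∈ s) : 0 < F x * (1 - F x) :=
  mul_pos (hF.mem_Ioo x hx).1 (sub_pos.mpr (hF.mem_Ioo x hx).2)

lemma steepness_pos (hF : RegularLink F s L β) (hx : x ∈ s) : 0 < L :=
  (div_pos (abs_pos.mpr (hF.deriv_ne_zero x hx)) (hF.variance_pos hx)).trans_le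
    (hF.steepness_le x hx)

lemma flatness_pos (hF : RegularLink F s L β) (hx : x ∈ s) : 0 < β :=
  (div_pos (hF.variance_pos hx) (sq_pos_of_ne_zero (hF.deriv_ne_zero x hx))).trans_le
    (hF.flatness_le x hx)

end RegularLink

section MaximumLikelihood

variable {d1 d2 n : ℕ} {α R μ L β : ℝ} {F : ℝ → ℝ} {π : Fin d1 → Fin d2 → ℝ}
  {Mstar : Matrix (Fin d1) (Fin d2) ℝ}

lemma mul_frobeniusNorm_sq_div_le {s : Set ℝ} (hs : s.OrdConnected) (hF : RegularLink F s L β)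
    (hμ : 0 < μ) (hβ : 0 ≤ β) (hπμ : ∀ k l, 1 / (μ * d1 * d2) ≤ π k l)
    {M : Matrix (Fin d1) (Fin d2) ℝ} (hMstar : ∀ k l, Mstar k l ∈ s) (hM : ∀ k l, M k l ∈ s)
    {w : Fin n → (Fin d1 × Fin d2) × Bool}
    (hle : negLogLik F (fun t ↦ (w t).1) (fun t ↦ (w t).2) M
      ≤ negLogLik F (fun t ↦ (w t).1) (fun t ↦ (w t).2) Mstar) :
    n * (frobeniusNorm (M - Mstar) ^ 2 / (d1 * d2))
      ≤ Real.pi ^ 2 * μ * β * ∑ t, (∑ v, obsWeight F π Mstar v * excessLoss F Mstar M v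
          - excessLoss F Mstar M (w t)) := by
  have excess_nonpos : ∑ t, excessLoss F Mstar M (w t) ≤ 0 :=
    (sum_excessLoss_eq_negLogLik_sub F Mstar M _ _).trans_le (sub_nonpos.mpr hle)
  calc n * (frobeniusNorm (M - Mstar) ^ 2 / (d1 * d2))
      ≤ n * (Real.pi ^ 2 * μ * β * ∑ v, obsWeight F π Mstar v * excessLoss F Mstar M v) := by
        gcongr
        exact frobeniusNorm_sq_div_le_mul_sum_excessLoss hs hF.differentiableAt hF.mem_Ioo
          hF.deriv_ne_zero hF.flatness_le hμ hπμ hMstar hM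
    _ = Real.pi ^ 2 * μ * β * (n * ∑ v, obsWeight F π Mstar v * excessLoss F Mstar M v) := by
        ring
    _ ≤ Real.pi ^ 2 * μ * β * ∑ t, (∑ v, obsWeight F π Mstar v * excessLoss F Mstar M v
          - excessLoss F Mstar M (w t)) := by
        gcongr
        rw [Finset.sum_sub_distrib, Finset.sum_const, Finset.card_univ, Fintype.card_fin,
          nsmul_eq_mul]
        linarith

lemma two_pow_mul_exp_half_mul_exp_le (d : ℕ) :
    2 ^ d * Real.exp (d / 2) * Real.exp (-(5 / 2 * d)) ≤ Real.exp (-d) := by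
  have two_pow_le : (2 : ℝ) ^ d ≤ Real.exp d := by
    rw [← Real.exp_one_pow]
    gcongr
    linarith [Real.add_one_le_exp 1]
  calc 2 ^ d * Real.exp (d / 2) * Real.exp (-(5 / 2 * d))
      ≤ Real.exp d * Real.exp (d / 2) * Real.exp (-(5 / 2 * d)) := by gcongr
    _ = Real.exp (-d) := by
        rw [← Real.exp_add, ← Real.exp_add]
        ring_nf

/-- The process is indexed by the samples themselves: the finitely many values of the estimator
are the only competitors to be controlled uniformly. -/
lemma one_sub_exp_neg_le_sum_indicator_prod_obsWeight (hd1 : 0 < d1) (hd2 : 0 < d2) (hn : 0 < n)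
    (hR : 0 < R) (hμ : 0 < μ) (hF : RegularLink F (Set.Icc (-α) α) L β)
    (hMstar : Mstar ∈ maxNormBall α R) (hπ1 : ∑ k, ∑ l, π k l = 1)
    (hπμ : ∀ k l, 1 / (μ * d1 * d2) ≤ π k l)
    {Mhat : (Fin n → (Fin d1 × Fin d2) × Bool) → Matrix (Fin d1) (Fin d2) ℝ}
    (hMhat : ∀ w, Mhat w ∈ maxNormBall α R)
    (hle : ∀ w, negLogLik F (fun t ↦ (w t).1) (fun t ↦ (w t).2) (Mhat w)
      ≤ negLogLik F (fun t ↦ (w t).1) (fun t ↦ (w t).2) Mstar) :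
    1 - Real.exp (-(d1 + d2)) ≤ ∑ w, Set.indicator
      {w | frobeniusNorm (Mhat w - Mstar) ^ 2 / (d1 * d2)
        ≤ 960 * Real.pi ^ 2 * μ * β * (L * R * √((d1 + d2) / n))}
      (fun w ↦ ∏ t, obsWeight F π Mstar (w t)) w := by
  set r := √((d1 + d2 : ℝ) / n) with r_def
  have r_pos : 0 < r := by positivity
  have n_mul_r_sq : n * r ^ 2 = d1 + d2 := by
    rw [r_def, Real.sq_sqrt (by positivity)]
    field_simp
  have Mstar_mem := apply_mem_Icc_of_linfNorm_le hMstar.1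
  have Mhat_mem (w) := apply_mem_Icc_of_linfNorm_le (hMhat w).1
  have L_pos := hF.steepness_pos (Mstar_mem ⟨0, hd1⟩ ⟨0, hd2⟩)
  have β_pos := hF.flatness_pos (Mstar_mem ⟨0, hd1⟩ ⟨0, hd2⟩)
  have π_nonneg (k l) : 0 ≤ π k l := le_trans (by positivity) (hπμ k l)
  have weight_nonneg : ∀ v, 0 ≤ obsWeight F π Mstar v :=
    obsWeight_nonneg (fun k l ↦ Set.Ioo_subset_Icc_self (hF.mem_Ioo _ (Mstar_mem k l))) π_nonneg
  have : Nonempty (Fin n → (Fin d1 × Fin d2) × Bool) := ⟨fun _ ↦ ((⟨0, hd1⟩, ⟨0, hd2⟩), true)⟩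
  refine le_trans ?_ (one_sub_mul_exp_neg_le_sum_indicator (τ := 5 / 2 * (d1 + d2))
    (fun w ↦ Finset.prod_nonneg fun t _ ↦ weight_nonneg (w t)) (sum_prod_obsWeight hπ1)
    (sum_prod_obsWeight_mul_exp_iSup_excessLoss_le (convex_Icc (-α) α) hF.differentiableAt
      hF.mem_Ioo L_pos.le hF.steepness_le hd2 π_nonneg hπ1 Mstar_mem hMstar.2 Mhat_mem
      (fun w ↦ (hMhat w).2) (c := r / (384 * L * R)) (by positivity)) fun w hw ↦ ?_)
  · rw [div_mul_cancel₀ _ (by positivity), ← mul_div_assoc, n_mul_r_sq]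
    exact_mod_cast sub_le_sub_left (two_pow_mul_exp_half_mul_exp_le (d1 + d2)) 1
  · have deviation_lt := (mul_lt_mul_of_pos_left (not_le.mp hw) (Nat.cast_pos.mpr hn)).trans_le
      (mul_frobeniusNorm_sq_div_le Set.ordConnected_Icc hF hμ β_pos.le hπμ Mstar_mem
        (Mhat_mem w) (hle w))
    calc 5 / 2 * (d1 + d2 : ℝ) = r / (384 * L * R) * (960 * n * (L * R * r)) := by
          rw [← n_mul_r_sq]
          field_simp
          norm_num
      _ ≤ _ := by
          gcongr
          refine le_trans ?_ (le_ciSup (Set.finite_range _).bddAbove w)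
          refine le_of_mul_le_mul_left (a := Real.pi ^ 2 * μ * β) ?_ (by positivity)
          linarith

theorem maxNorm_MLE_frobenius_upper_bound_general (hd1 : 0 < d1) (hd2 : 0 < d2) (hn : 0 < n)
    (hR : 0 < R) (hμ : 0 < μ) (hF : RegularLink F (Set.Icc (-α) α) L β)
    (hMstar : Mstar ∈ maxNormBall α R) (hπ1 : ∑ k, ∑ l, π k l = 1)
    (hπμ : ∀ k l, 1 / (μ * d1 * d2) ≤ π k l)
    {Mhat : (Fin n → Fin d1 × Fin d2) → (Fin n → Bool) → Matrix (Fin d1) (Fin d2) ℝ}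
    (hMhat : ∀ S y, Mhat S y ∈ maxNormBall α R)
    (hle : ∀ S y, negLogLik F S y (Mhat S y) ≤ negLogLik F S y Mstar) :
    1 - Real.exp (-(d1 + d2)) ≤ ∑ S, ∑ y, Set.indicator
      {p : (Fin n → Fin d1 × Fin d2) × (Fin n → Bool) |
        frobeniusNorm (Mhat p.1 p.2 - Mstar) ^ 2 / (d1 * d2)
          ≤ 960 * Real.pi ^ 2 * μ * β * (L * R * √((d1 + d2) / n))}
      (fun p ↦ sampleWeight F π Mstar p.1 p.2) (S, y) := by
  refine (one_sub_exp_neg_le_sum_indicator_prod_obsWeight hd1 hd2 hn hR hμ hF hMstar hπ1 hπμ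
    (Mhat := fun w ↦ Mhat (fun t ↦ (w t).1) fun t ↦ (w t).2) (fun w ↦ hMhat _ _)
    fun w ↦ hle _ _).trans_eq ?_
  rw [← Fintype.sum_prod_type']
  exact Fintype.sum_equiv (Equiv.arrowProdEquivProdArrow (Fin n) (fun _ ↦ Fin d1 × Fin d2)
    fun _ ↦ Bool) _ _ fun w ↦ rfl

end MaximumLikelihood

lemma exp_neg_le_four_div {d : ℝ} (hd : 0 < d) : Real.exp (-d) ≤ 4 / d := by
  rw [Real.exp_neg, ← one_div]
  exact div_le_div₀ (by norm_num) (by norm_num) hd (by linarith [Real.add_one_le_exp d])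

lemma log_one_div_mul_one_sub_nonneg {p : ℝ} (hp : p ∈ Set.Ioo 0 1) :
    0 ≤ Real.log (1 / (p * (1 - p))) := by
  refine Real.log_nonneg ((one_le_div (mul_pos hp.1 (sub_pos.mpr hp.2))).mpr ?_)
  nlinarith [hp.1, hp.2]

/-- Frobenius-norm upper bound for the max-norm constrained MLE of 1-bit
matrix completion when each entry is sampled with probability at least `1/(μ d1 d2)`.
There is an absolute constant `C > 0` such that, with probability at least `1 − 4/d`,
`(1/(d1 d2)) ‖M̂ − M*‖_F² ≤ C μ β_α { L_α R √(d/n) + U_α √(log(d)/n) }`, `d = d1 + d2`. -/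
theorem maxNorm_MLE_frobenius_upper_bound :
    ∃ C : ℝ, 0 < C ∧
      ∀ (d1 d2 n : ℕ) (α R μ : ℝ) (F : ℝ → ℝ) (π : Fin d1 → Fin d2 → ℝ)
        (Mstar : Matrix (Fin d1) (Fin d2) ℝ) (Lα βα Uα : ℝ)
        (Mhat : (Fin n → Fin d1 × Fin d2) → (Fin n → Bool) →
          Matrix (Fin d1) (Fin d2) ℝ),
        1 ≤ d1 → 1 ≤ d2 → 2 < n → n ≤ d1 * d2 → 0 < α → 0 < R →
        Differentiable ℝ F → (∀ x, 0 < F x ∧ F x < 1) →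
        (∀ x ∈ Set.Icc (-α) α, deriv F x ≠ 0) →
        IsLUB ((fun x => |deriv F x| / (F x * (1 - F x))) '' Set.Icc (-α) α) Lα →
        IsLUB ((fun x => F x * (1 - F x) / (deriv F x) ^ 2) '' Set.Icc (-α) α) βα →
        IsLUB ((fun x => Real.log (1 / (F x * (1 - F x)))) '' Set.Icc (-α) α) Uα →
        linfNorm Mstar ≤ α → maxNorm Mstar ≤ R →
        (∀ k l, 0 ≤ π k l) → (∑ k, ∑ l, π k l = 1) →
        1 ≤ μ → (∀ k l, 1 / (μ * d1 * d2) ≤ π k l) →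
        (∀ (S : Fin n → Fin d1 × Fin d2) (y : Fin n → Bool),
          (linfNorm (Mhat S y) ≤ α ∧ maxNorm (Mhat S y) ≤ R) ∧
          ∀ M : Matrix (Fin d1) (Fin d2) ℝ, linfNorm M ≤ α → maxNorm M ≤ R →
            negLogLik F S y (Mhat S y) ≤ negLogLik F S y M) →
        1 - 4 / (d1 + d2 : ℝ) ≤
          ∑ S : Fin n → Fin d1 × Fin d2, ∑ y : Fin n → Bool,
            Set.indicator
              { p : (Fin n → Fin d1 × Fin d2) × (Fin n → Bool) |
                frobeniusNorm (Mhat p.1 p.2 - Mstar) ^ 2 / (d1 * d2 : ℝ) ≤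
                  C * μ * βα * (Lα * R * Real.sqrt ((d1 + d2 : ℝ) / n) +
                    Uα * Real.sqrt (Real.log (d1 + d2 : ℝ) / n)) }
              (fun p => sampleWeight F π Mstar p.1 p.2) (S, y) := by
  refine ⟨960 * Real.pi ^ 2, by positivity, ?_⟩
  intro d1 d2 n α R μ F π Mstar Lα βα Uα Mhat hd1 hd2 hn _ hα hR hdiff hF hF' hL hβ hU
    hMstar hMstarR hπ hπ1 hμ hπμ hMhat
  have zero_mem : (0 : ℝ) ∈ Set.Icc (-α) α := ⟨by linarith, hα.le⟩
  have link : RegularLink F (Set.Icc (-α) α) Lα βα :=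
    ⟨fun x _ ↦ hdiff x, fun x _ ↦ hF x, hF', fun x hx ↦ hL.1 ⟨x, hx, rfl⟩,
      fun x hx ↦ hβ.1 ⟨x, hx, rfl⟩⟩
  have βα_pos := link.flatness_pos zero_mem
  have Uα_nonneg : 0 ≤ Uα :=
    (log_one_div_mul_one_sub_nonneg (hF 0)).trans (hU.1 ⟨0, zero_mem, rfl⟩)
  have weight_nonneg : ∀ p : (Fin n → Fin d1 × Fin d2) × (Fin n → Bool),
      0 ≤ sampleWeight F π Mstar p.1 p.2 :=
    fun p ↦ sampleWeight_nonneg (fun k l ↦ Set.Ioo_subset_Icc_self (hF _)) hπ p.1 p.2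
  refine (sub_le_sub_left (exp_neg_le_four_div (by positivity)) 1).trans
    ((maxNorm_MLE_frobenius_upper_bound_general hd1 hd2 (by positivity) hR (by positivity) link
      ⟨hMstar, hMstarR⟩ hπ1 hπμ (fun S y ↦ (hMhat S y).1)
      fun S y ↦ (hMhat S y).2 Mstar hMstar hMstarR).trans ?_)
  refine Finset.sum_le_sum fun S _ ↦ Finset.sum_le_sum fun y _ ↦
    Set.indicator_le_indicator_of_subset ?_ weight_nonneg (S, y)
  refine fun p hp ↦ le_trans (Set.mem_ofPred.mp hp) ?_
  gcongr
  exact le_add_of_nonneg_right (by positivity)
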